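/- arXiv:2509.06435 — 5 statements merged into one kernel-verified Lean document; each statement's English description precedes it below -/
import Mathlib

section
/- Let I be a common independent set of matroids M₁ and M₂ on a common finite ground set S. Then I has maximum cardinality among all common independent sets of M₁ and M₂ if and only if there is no directed path from a vertex of X₁ to a vertex of X₂ in the exchange graph 𝓔(M₁,M₂,I). -/
/-- `I` is a common independent set of the matroids `M₁` and `M₂`. -/
def CommonIndep {α : Type*} (M₁ M₂ : Matroid α) (I : Finset α) : Prop :=
  M₁.Indep ↑I ∧ M₂.Indep ↑I

/-- Adjacency in the exchange graph `𝓔(M₁,M₂,I)`: for `y ∈ I` and `x ∉ I` there is an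
edge `(y,x)` iff `(I \ {y}) ∪ {x} ∈ 𝓘₁`, and an edge `(x,y)` iff `(I \ {y}) ∪ {x} ∈ 𝓘₂`. -/
def ExchAdj {α : Type*} [DecidableEq α] (M₁ M₂ : Matroid α) (I : Finset α) (u v : α) : Prop :=
  (u ∈ I ∧ v ∉ I ∧ M₁.Indep ↑(insert v (I.erase u))) ∨
  (u ∉ I ∧ v ∈ I ∧ M₂.Indep ↑(insert u (I.erase v)))

/-- `x ∈ X₁`, i.e. `x ∉ I` and `I ∪ {x} ∈ 𝓘₁` (and analogously for `X₂` with `M₂`). -/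
def memX {α : Type*} [DecidableEq α] (M : Matroid α) (I : Finset α) (x : α) : Prop :=
  x ∉ I ∧ M.Indep ↑(insert x I)


section aux
variable {α : Type*}

lemma aux_mem_fund {M : Matroid α} {I : Set α} (hI : M.Indep I) {x : α}
    (hx : x ∈ M.closure I) (hxI : x ∉ I) {y : α} (hy : y ∈ I) :
    y ∈ M.fundCircuit x I ↔ M.Indep (insert x (I \ {y})) := by
  rw [hI.mem_fundCircuit_iff hx hxI, Set.insert_sdiff_of_notMem]
  rintro rfl
  exact hxI hy

lemma aux_exch {M : Matroid α} (hE : M.E = Set.univ) {I A : Set α} (hI : M.Indep I) {x : α}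
    (hxI : x ∉ I) (hx : ¬ M.Indep (insert x I)) (hA : M.Indep (insert x A)) :
    ∃ y ∈ I, y ∉ A ∧ M.Indep (insert x (I \ {y})) := by
  have hcl : x ∈ M.closure I := by
    rw [hI.mem_closure_iff']
    exact ⟨by simp [hE], fun h => (hx h).elim⟩
  have hC := hI.fundCircuit_isCircuit hcl hxI
  have : ¬ M.fundCircuit x I ⊆ insert x A := fun h => hC.not_indep (hA.subset h)
  obtain ⟨y, hy, hyA⟩ := Set.not_subset.1 this
  have hyI : y ∈ I := by
    rcases M.fundCircuit_subset_insert x I hy with rfl | h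
    · exact (hyA (Set.mem_insert _ _)).elim
    · exact h
  exact ⟨y, hyI, fun h => hyA (Set.mem_insert_of_mem _ h), (aux_mem_fund hI hcl hxI hyI).1 hy⟩

lemma aux_tri {M : Matroid α} {I : Set α} (hI : M.Indep I) (x y : ℕ → α) (n : ℕ)
    (hy : ∀ i < n, y i ∈ I) (hx : ∀ i < n, x i ∉ I) (hcl : ∀ i < n, x i ∈ M.closure I)
    (hinj : ∀ i j, i < j → j < n → x i ≠ x j)
    (hadj : ∀ i < n, y i ∈ M.fundCircuit (x i) I)
    (hno : ∀ i j, i < j → j < n → y i ∉ M.fundCircuit (x j) I) :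
    ∀ k ≤ n, M.Indep {a | (a ∈ I ∧ ∀ i < k, a ≠ y i) ∨ ∃ i < k, a = x i} ∧
      M.closure {a | (a ∈ I ∧ ∀ i < k, a ≠ y i) ∨ ∃ i < k, a = x i} = M.closure I := by
  intro k
  induction k with
  | zero => intro _; simpa using hI
  | succ k ih =>
    intro hk
    obtain ⟨h1, h2⟩ := ih (by omega)
    set T := {a | (a ∈ I ∧ ∀ i < k, a ≠ y i) ∨ ∃ i < k, a = x i} with hT
    have hxT : x k ∉ T := by
      rintro (⟨h, _⟩ | ⟨i, hi, h⟩)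
      · exact hx k (by omega) h
      · exact hinj i k hi (by omega) h.symm
    have hxc : x k ∈ M.closure T := by rw [h2]; exact hcl k (by omega)
    have hC := hI.fundCircuit_isCircuit (hcl k (by omega)) (hx k (by omega))
    have hsub : M.fundCircuit (x k) I ⊆ insert (x k) T := by
      intro a ha
      rcases M.fundCircuit_subset_insert _ _ ha with rfl | h
      · exact Set.mem_insert _ _
      · refine Set.mem_insert_of_mem _ (Or.inl ⟨h, ?_⟩)
        rintro i hi rfl
        exact hno i k hi (by omega) ha
    have heq := hC.eq_fundCircuit_of_subset h1 hsub
    have hyk : y k ∈ M.fundCircuit (x k) T := heq ▸ hadj k (by omega)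
    have hnew : {a | (a ∈ I ∧ ∀ i < k + 1, a ≠ y i) ∨ ∃ i < k + 1, a = x i}
        = insert (x k) T \ {y k} := by
      ext a
      have hyx : ∀ i < k + 1, x i ≠ y k := by
        intro i hi h
        exact hx i (by omega) (h ▸ hy k (by omega))
      simp only [Nat.lt_succ_iff_lt_or_eq, hT, Set.mem_sdiff, Set.mem_insert_iff,
        Set.mem_singleton_iff, Set.mem_ofPred_eq] at hyx ⊢
      constructor
      · rintro (⟨ha, h⟩ | ⟨i, hi | hi, rfl⟩)
        · exact ⟨Or.inr (Or.inl ⟨ha, fun i hi => h i (Or.inl hi)⟩), h k (Or.inr rfl)⟩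
        · exact ⟨Or.inr (Or.inr ⟨i, hi, rfl⟩), hyx i (Or.inl hi)⟩
        · subst hi
          exact ⟨Or.inl rfl, hyx i (Or.inr rfl)⟩
      · rintro ⟨rfl | ⟨ha, h⟩ | ⟨i, hi, rfl⟩, hne⟩
        · exact Or.inr ⟨k, Or.inr rfl, rfl⟩
        · refine Or.inl ⟨ha, ?_⟩
          rintro i (hi | rfl)
          · exact h i hi
          · exact hne
        · exact Or.inr ⟨i, Or.inl hi, rfl⟩
    rw [hnew]
    refine ⟨(h1.mem_fundCircuit_iff hxc hxT).1 hyk, ?_⟩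
    have hC' := h1.fundCircuit_isCircuit hxc hxT
    have h3 : y k ∈ M.closure (insert (x k) T \ {y k}) :=
      M.closure_subset_closure (Set.sdiff_subset_sdiff_left (M.fundCircuit_subset_insert _ _))
        (hC'.mem_closure_sdiff_singleton_of_mem hyk)
    have h4 := (M.mem_closure_sdiff_singleton_iff_closure
      (M.fundCircuit_subset_insert _ _ hyk) (hC'.subset_ground hyk)).1 h3
    rw [h4, ← h2, M.closure_insert_eq_of_mem_closure hxc]

lemma aux_half {M : Matroid α} (hE : M.E = Set.univ) {I : Set α} (hI : M.Indep I) (f : ℕ → α)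
    (n : ℕ) (hodd : ∀ i < n, f (2 * i + 1) ∈ I) (heven : ∀ i ≤ n, f (2 * i) ∉ I)
    (hinj : ∀ i j, i < j → j ≤ n → f (2 * i) ≠ f (2 * j))
    (h0 : M.Indep (insert (f 0) I))
    (hX : ∀ i < n, ¬ M.Indep (insert (f (2 * (i + 1))) I))
    (hadj : ∀ i < n, M.Indep (insert (f (2 * (i + 1))) (I \ {f (2 * i + 1)})))
    (hno : ∀ i j, i < j → j < n → ¬ M.Indep (insert (f (2 * (j + 1))) (I \ {f (2 * i + 1)}))) :
    M.Indep {a | (a ∈ I ∧ ∀ i < n, a ≠ f (2 * i + 1)) ∨ ∃ i ≤ n, a = f (2 * i)} := by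
  have hcl : ∀ i < n, f (2 * (i + 1)) ∈ M.closure I := by
    intro i hi
    rw [hI.mem_closure_iff']
    exact ⟨by simp [hE], fun h => (hX i hi h).elim⟩
  obtain ⟨h1, h2⟩ := aux_tri hI (fun i => f (2 * (i + 1))) (fun i => f (2 * i + 1)) n hodd
    (fun i hi => heven _ (by omega)) hcl (fun i j h h' => hinj _ _ (by omega) (by omega))
    (fun i hi => (aux_mem_fund hI (hcl i hi) (heven _ (by omega)) (hodd i hi)).2 (hadj i hi))
    (fun i j h h' hh => hno i j h h' ((aux_mem_fund hI (hcl j h') (heven _ (by omega))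
      (hodd i (by omega))).1 hh)) n le_rfl
  have h3 : f 0 ∉ M.closure I := by
    rw [hI.notMem_closure_iff (by simp [hE])]
    exact ⟨h0, heven 0 (by omega)⟩
  rw [← h2, h1.notMem_closure_iff (by simp [hE])] at h3
  refine h3.1.subset ?_
  rintro a (h | ⟨i, hi, rfl⟩)
  · exact Or.inr (Or.inl h)
  · rcases i with _ | i
    · exact Or.inl rfl
    · exact Or.inr (Or.inr ⟨i, by omega, rfl⟩)

def PathLen [DecidableEq α] (M₁ M₂ : Matroid α) (I : Finset α) (f : ℕ → α) (m : ℕ) : Prop :=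
  memX M₁ I (f 0) ∧ memX M₂ I (f m) ∧ ∀ i < m, ExchAdj M₁ M₂ I (f i) (f (i + 1))

lemma aux_min [DecidableEq α] {M₁ M₂ : Matroid α} {I : Finset α}
    (h : ∃ m f, PathLen M₁ M₂ I f m) :
    ∃ m f, PathLen M₁ M₂ I f m ∧
      (∀ i j, i + 1 < j → j ≤ m → ¬ ExchAdj M₁ M₂ I (f i) (f j)) ∧
      (∀ i, 0 < i → i ≤ m → ¬ memX M₁ I (f i)) ∧
      (∀ i < m, ¬ memX M₂ I (f i)) ∧
      (∀ i j, i < j → j ≤ m → f i ≠ f j) := by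
  classical
  obtain ⟨f, hf⟩ := Nat.find_spec h
  have hmin := fun k hk => Nat.find_min h (m := k) hk
  set m := Nat.find h
  obtain ⟨h1, h2, h3⟩ := hf
  have hb : ∀ i j, i + 1 < j → j ≤ m → ¬ ExchAdj M₁ M₂ I (f i) (f j) := by
    intro i j hij hj hadj
    refine hmin (m - (j - i - 1)) (by omega)
      ⟨fun k => if k ≤ i then f k else f (k + (j - i - 1)), ?_, ?_, ?_⟩
    · simpa using h1
    · simp only [if_neg (show ¬ m - (j - i - 1) ≤ i by omega)]
      rwa [show m - (j - i - 1) + (j - i - 1) = m by omega]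
    · intro k hk
      rcases lt_trichotomy k i with h | h | h
      · simp only [if_pos h.le, if_pos (show k + 1 ≤ i by omega)]
        exact h3 k (by omega)
      · subst h
        simp only [if_pos le_rfl, if_neg (show ¬ k + 1 ≤ k by omega)]
        rwa [show k + 1 + (j - k - 1) = j by omega]
      · simp only [if_neg (show ¬ k ≤ i by omega), if_neg (show ¬ k + 1 ≤ i by omega)]
        rw [show k + 1 + (j - i - 1) = k + (j - i - 1) + 1 by omega]
        exact h3 _ (by omega)
  have hd : ∀ i < m, ¬ memX M₂ I (f i) := fun i hi hh =>
    hmin i hi ⟨f, h1, hh, fun k hk => h3 k (by omega)⟩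
  refine ⟨m, f, ⟨h1, h2, h3⟩, hb, ?_, hd, ?_⟩
  · intro i hi him hh
    refine hmin (m - i) (by omega) ⟨fun k => f (k + i), by simpa using hh, ?_, ?_⟩
    · simpa [show m - i + i = m by omega] using h2
    · intro k hk
      have := h3 (k + i) (by omega)
      rwa [show k + i + 1 = k + 1 + i by omega] at this
  · intro i j hij hj he
    rcases eq_or_lt_of_le hj with h | h
    · subst h
      exact hd i hij (he ▸ h2)
    · exact hb i (j + 1) (by omega) (by omega) (he ▸ h3 j h)

lemma aux_list [DecidableEq α] {M₁ M₂ : Matroid α} {I : Finset α} :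
    (∃ (l : List α) (h : l ≠ []),
          l.IsChain (ExchAdj M₁ M₂ I) ∧ l.Nodup ∧
          memX M₁ I (l.head h) ∧ memX M₂ I (l.getLast h)) ↔ ∃ m f, PathLen M₁ M₂ I f m := by
  constructor
  · rintro ⟨l, h, hc, -, h1, h2⟩
    have hl : 0 < l.length := List.length_pos_iff.2 h
    have key : ∀ i (hi : i < l.length), l.getD i (l.head h) = l[i] := by
      intro i hi; simp [hi]
    refine ⟨l.length - 1, fun i => l.getD i (l.head h), ?_, ?_, ?_⟩
    · simp only
      rw [key 0 hl, ← List.head_eq_getElem h]; exact h1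
    · simp only
      rw [key _ (by omega), ← List.getLast_eq_getElem h]; exact h2
    · intro i hi
      simp only
      rw [key _ (by omega), key _ (by omega)]
      exact List.isChain_iff_getElem.1 hc i (by omega)
  · intro h
    obtain ⟨m, f, ⟨h1, h2, h3⟩, -, -, -, hinj⟩ := aux_min h
    refine ⟨(List.range (m + 1)).map f, by simp, ?_, ?_, ?_, ?_⟩
    · rw [List.isChain_iff_getElem]
      intro i hi
      simp only [List.length_map, List.length_range] at hi
      simpa using h3 i (by omega)
    · rw [List.Nodup, List.pairwise_map]
      refine (List.pairwise_lt_range (n := m + 1)).imp_of_mem ?_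
      intro a b ha hb hab
      simp at ha hb
      exact hinj a b hab (by omega)
    · simpa [List.head_eq_getElem] using h1
    · simpa [List.getLast_eq_getElem] using h2

lemma aux_parity [DecidableEq α] {M₁ M₂ : Matroid α} {I : Finset α} {m : ℕ} {f : ℕ → α}
    (h : PathLen M₁ M₂ I f m) : ∀ i ≤ m, (f i ∈ I ↔ Odd i) := by
  intro i
  induction i with
  | zero => intro _; simpa using h.1.1
  | succ i ih =>
    intro hi
    have := ih (by omega)
    rw [Nat.odd_add_one, ← this]
    rcases h.2.2 i (by omega) with ⟨a, b, -⟩ | ⟨a, b, -⟩ <;> tauto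

lemma aux_augment [DecidableEq α] {M₁ M₂ : Matroid α}
    (hE₁ : M₁.E = Set.univ) (hE₂ : M₂.E = Set.univ) {I : Finset α} (hI : CommonIndep M₁ M₂ I)
    (h : ∃ m f, PathLen M₁ M₂ I f m) : ∃ J : Finset α, CommonIndep M₁ M₂ J ∧ I.card < J.card := by
  obtain ⟨m, f, hp, hb, hc, hd, hinj⟩ := aux_min h
  have hpar := aux_parity hp
  obtain ⟨n, rfl⟩ : ∃ n, m = 2 * n := by
    have : ¬ Odd m := by rw [← hpar m le_rfl]; exact hp.2.1.1
    rw [Nat.not_odd_iff_even] at this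
    obtain ⟨n, hn⟩ := this
    exact ⟨n, by omega⟩
  have hodd : ∀ i < n, f (2 * i + 1) ∈ I := fun i hi =>
    (hpar _ (by omega)).2 ⟨i, rfl⟩
  have heven : ∀ i ≤ n, f (2 * i) ∉ I := fun i hi => by
    rw [hpar _ (by omega)]; simp
  obtain ⟨h1, h2, h3⟩ := hp
  have e1 : ∀ i < n, ∀ j ≤ n, ExchAdj M₁ M₂ I (f (2 * i + 1)) (f (2 * j)) ↔
      M₁.Indep (insert (f (2 * j)) ((I : Set α) \ {f (2 * i + 1)})) := by
    intro i hi j hj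
    simp [ExchAdj, hodd i hi, heven j hj]
  have e2 : ∀ i < n, ∀ j ≤ n, ExchAdj M₁ M₂ I (f (2 * j)) (f (2 * i + 1)) ↔
      M₂.Indep (insert (f (2 * j)) ((I : Set α) \ {f (2 * i + 1)})) := by
    intro i hi j hj
    simp [ExchAdj, hodd i hi, heven j hj]
  have m1 : ∀ j ≤ n, memX M₁ I (f (2 * j)) ↔ M₁.Indep (insert (f (2 * j)) (I : Set α)) := by
    intro j hj; simp [memX, heven j hj]
  have m2 : ∀ j ≤ n, memX M₂ I (f (2 * j)) ↔ M₂.Indep (insert (f (2 * j)) (I : Set α)) := by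
    intro j hj; simp [memX, heven j hj]
  have H1 : M₁.Indep {a | (a ∈ (I : Set α) ∧ ∀ i < n, a ≠ f (2 * i + 1)) ∨
      ∃ i ≤ n, a = f (2 * i)} := by
    refine aux_half hE₁ hI.1 f n hodd heven (fun i j h h' => hinj _ _ (by omega) (by omega))
      ((m1 0 (by omega)).1 h1) ?_ ?_ ?_
    · intro i hi
      rw [← m1 _ (by omega)]
      exact hc _ (by omega) (by omega)
    · intro i hi
      rw [← e1 i hi _ (by omega)]
      exact h3 _ (by omega)
    · intro i j hij hj
      rw [← e1 i (by omega) _ (by omega)]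
      exact hb _ _ (by omega) (by omega)
  have r1 : ∀ i < n, 2 * n - (2 * i + 1) = 2 * (n - 1 - i) + 1 := by intro i hi; omega
  have r2 : ∀ i, 2 * n - 2 * i = 2 * (n - i) := by intro i; omega
  have H2 : M₂.Indep {a | (a ∈ (I : Set α) ∧ ∀ i < n, a ≠ f (2 * n - (2 * i + 1))) ∨
      ∃ i ≤ n, a = f (2 * n - 2 * i)} := by
    refine aux_half hE₂ hI.2 (fun k => f (2 * n - k)) n ?_ ?_ ?_ ?_ ?_ ?_ ?_
    · intro i hi
      simp only [r1 i hi]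
      exact hodd _ (by omega)
    · intro i hi
      simp only [r2]
      exact heven _ (by omega)
    · intro i j h h'
      exact (hinj _ _ (by omega) (by omega)).symm
    · exact (m2 n le_rfl).1 h2
    · intro i hi
      simp only [r2]
      rw [← m2 _ (by omega)]
      exact hd _ (by omega)
    · intro i hi
      simp only [r1 i hi, r2]
      rw [← e2 _ (by omega) _ (by omega)]
      have := h3 (2 * (n - (i + 1))) (by omega)
      rwa [show n - 1 - i = n - (i + 1) by omega]
    · intro i j hij hj
      simp only [r1 i (by omega), r2]
      rw [← e2 _ (by omega) _ (by omega)]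
      exact hb _ _ (by omega) (by omega)
  let Y := (Finset.range n).image (fun i => f (2 * i + 1))
  let X := (Finset.range (n + 1)).image (fun i => f (2 * i))
  have hX : X.card = n + 1 := by
    rw [Finset.card_image_of_injOn, Finset.card_range]
    intro i hi j hj hij
    simp at hi hj
    rcases lt_trichotomy i j with h | h | h
    · exact (hinj _ _ (by omega) (by omega) hij).elim
    · exact h
    · exact (hinj _ _ (by omega) (by omega) hij.symm).elim
  have hY : Y.card ≤ n := Finset.card_image_le.trans (by simp)
  have hdisj : Disjoint (I \ Y) X := by
    rw [Finset.disjoint_left]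
    intro a ha hx
    obtain ⟨i, hi, rfl⟩ := Finset.mem_image.1 hx
    simp only [Finset.mem_range] at hi
    exact heven i (by omega) (Finset.mem_sdiff.1 ha).1
  have hYI : Y.card ≤ I.card := by
    apply Finset.card_le_card
    intro a ha
    obtain ⟨i, hi, rfl⟩ := Finset.mem_image.1 ha
    exact hodd i (by simpa using hi)
  refine ⟨(I \ Y) ∪ X, ⟨H1.subset ?_, H2.subset ?_⟩, ?_⟩
  · intro a ha
    simp only [Finset.coe_union, Finset.coe_sdiff, Set.mem_union, Set.mem_sdiff, Finset.mem_coe,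
      Y, X, Finset.mem_image, Finset.mem_range] at ha
    rcases ha with ⟨ha, hy⟩ | ⟨i, hi, rfl⟩
    · exact Or.inl ⟨ha, fun i hi h => hy ⟨i, hi, h.symm⟩⟩
    · exact Or.inr ⟨i, by omega, rfl⟩
  · intro a ha
    simp only [Finset.coe_union, Finset.coe_sdiff, Set.mem_union, Set.mem_sdiff, Finset.mem_coe,
      Y, X, Finset.mem_image, Finset.mem_range] at ha
    rcases ha with ⟨ha, hy⟩ | ⟨i, hi, rfl⟩
    · refine Or.inl ⟨ha, fun i hi h => hy ⟨n - 1 - i, by omega, ?_⟩⟩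
      rw [h, r1 i hi]
    · exact Or.inr ⟨n - i, by omega, by rw [r2]; congr 2; omega⟩
  · rw [Finset.card_union_of_disjoint hdisj, hX]
    have := Finset.le_card_sdiff Y I
    omega

lemma aux_card [DecidableEq α] {M : Matroid α} {A B : Finset α} (hA : M.Indep (A : Set α))
    (hB : M.Indep (B : Set α)) (h : ∀ x ∈ B, x ∉ A → ¬ M.Indep (insert x (A : Set α))) :
    B.card ≤ A.card := by
  by_contra! hlt
  obtain ⟨x, hx, hi⟩ := hA.augment hB (by simpa using hlt)
  exact h x hx.1 hx.2 hi

lemma aux_max [DecidableEq α] {M₁ M₂ : Matroid α}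
    (hE₁ : M₁.E = Set.univ) (hE₂ : M₂.E = Set.univ) {I : Finset α} (hI : CommonIndep M₁ M₂ I)
    (hno : ¬ ∃ m f, PathLen M₁ M₂ I f m) (J : Finset α) (hJ : CommonIndep M₁ M₂ J) :
    J.card ≤ I.card := by
  classical
  let R : α → Prop := fun v => ∃ (m : ℕ) (f : ℕ → α), memX M₁ I (f 0) ∧ f m = v ∧
    ∀ i < m, ExchAdj M₁ M₂ I (f i) (f (i + 1))
  have hR0 : ∀ v, memX M₁ I v → R v := fun v hv => ⟨0, fun _ => v, hv, rfl, by simp⟩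
  have hR2 : ∀ v, R v → ¬ memX M₂ I v := by
    rintro v ⟨m, f, h1, rfl, h3⟩ h
    exact hno ⟨m, f, h1, h, h3⟩
  have hRs : ∀ u v, R u → ExchAdj M₁ M₂ I u v → R v := by
    rintro u v ⟨m, f, h1, rfl, h3⟩ h
    refine ⟨m + 1, fun k => if k ≤ m then f k else v, by simpa using h1, by simp, ?_⟩
    intro i hi
    rcases Nat.lt_succ_iff_lt_or_eq.1 hi with h' | rfl
    · simp only [if_pos h'.le, if_pos (show i + 1 ≤ m by omega)]
      exact h3 i h'
    · simpa using h
  have hcoe : ∀ (K : Finset α) (p : α → Prop) [DecidablePred p], ((K.filter p : Finset α) : Set α) ⊆ K :=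
    fun K p _ => Finset.coe_subset.2 (Finset.filter_subset _ _)
  have c1 : (J.filter R).card ≤ (I.filter R).card := by
    refine aux_card (hI.2.subset (hcoe _ _)) (hJ.2.subset (hcoe _ _)) ?_
    intro x hx hxI hi
    have hxR := (Finset.mem_filter.1 hx).2
    have hxI' : x ∉ I := fun h => hxI (Finset.mem_filter.2 ⟨h, hxR⟩)
    have hn : ¬ M₂.Indep (insert x (I : Set α)) := fun h =>
      hR2 x hxR ⟨hxI', by simpa using h⟩
    obtain ⟨y, hy, hyA, hyi⟩ := aux_exch hE₂ hI.2 (by simpa using hxI') hn hi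
    refine hyA ?_
    have : R y := hRs x y hxR (Or.inr ⟨hxI', by simpa using hy, by simpa using hyi⟩)
    exact Finset.mem_coe.2 (Finset.mem_filter.2 ⟨by simpa using hy, this⟩)
  have c2 : (J.filter (fun v => ¬ R v)).card ≤ (I.filter (fun v => ¬ R v)).card := by
    refine aux_card (hI.1.subset (hcoe _ _)) (hJ.1.subset (hcoe _ _)) ?_
    intro x hx hxI hi
    have hxR := (Finset.mem_filter.1 hx).2
    have hxI' : x ∉ I := fun h => hxI (Finset.mem_filter.2 ⟨h, hxR⟩)
    have hn : ¬ M₁.Indep (insert x (I : Set α)) := fun h =>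
      hxR (hR0 x ⟨hxI', by simpa using h⟩)
    obtain ⟨y, hy, hyA, hyi⟩ := aux_exch hE₁ hI.1 (by simpa using hxI') hn hi
    refine hyA ?_
    have : ¬ R y := fun hRy =>
      hxR (hRs y x hRy (Or.inl ⟨by simpa using hy, hxI', by simpa using hyi⟩))
    exact Finset.mem_coe.2 (Finset.mem_filter.2 ⟨by simpa using hy, this⟩)
  rw [← Finset.card_filter_add_card_filter_not (s := J) R,
    ← Finset.card_filter_add_card_filter_not (s := I) R]
  omega

end aux

/-- A common independent set `I` of matroids `M₁`, `M₂` on a common finite ground set has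
maximum cardinality among all common independent sets iff there is no directed path from a
vertex of `X₁` to a vertex of `X₂` in the exchange graph `𝓔(M₁,M₂,I)`. -/
theorem maxCard_iff_no_X1X2_path {α : Type*} [Fintype α] [DecidableEq α]
    (M₁ M₂ : Matroid α) (hE₁ : M₁.E = Set.univ) (hE₂ : M₂.E = Set.univ)
    (I : Finset α) (hI : CommonIndep M₁ M₂ I) :
    (∀ J : Finset α, CommonIndep M₁ M₂ J → J.card ≤ I.card) ↔
      ¬ ∃ (l : List α) (h : l ≠ []),
          l.Chain' (ExchAdj M₁ M₂ I) ∧ l.Nodup ∧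
          memX M₁ I (l.head h) ∧ memX M₂ I (l.getLast h) := by
  rw [show (∃ (l : List α) (h : l ≠ []),
          l.Chain' (ExchAdj M₁ M₂ I) ∧ l.Nodup ∧
          memX M₁ I (l.head h) ∧ memX M₂ I (l.getLast h)) ↔ ∃ m f, PathLen M₁ M₂ I f m
    from aux_list]
  constructor
  · intro h hp
    obtain ⟨J, hJ, hlt⟩ := aux_augment hE₁ hE₂ hI hp
    exact absurd (h J hJ) (by omega)
  · intro h J hJ
    exact aux_max hE₁ hE₂ hI h J hJ
end

section
/- If I_k is a minimum-weight common independent set of size k of matroids M₁ and M₂ (not necessarily unique), then the exchange graph 𝓔(M₁,M₂,I_k) contains no directed cycle of negative weight with respect to the vertex weights l. -/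
/-- The weight `W(I) = ∑_{s ∈ I} W(s)` of a set. -/
def setW {α : Type*} (W : α → ℤ) (I : Finset α) : ℤ := ∑ x ∈ I, W x

/-- The vertex weights of the exchange graph: `l(s) = -W(s)` if `s ∈ I`, else `l(s) = W(s)`. -/
def exchWt {α : Type*} [DecidableEq α] (W : α → ℤ) (I : Finset α) (s : α) : ℤ :=
  if s ∈ I then -W s else W s

/-- The weight of a walk/path/cycle given by the vertex list `l`: the sum of the vertex
weights over `l`. -/
def listW {α : Type*} [DecidableEq α] (W : α → ℤ) (I : Finset α) (l : List α) : ℤ :=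
  (l.map (exchWt W I)).sum

/-- `l` is (the vertex list of) a simple directed cycle for the adjacency relation `Adj`. -/
def IsCycle {α : Type*} (Adj : α → α → Prop) (l : List α) : Prop :=
  ∃ h : l ≠ [], l.Chain' Adj ∧ Adj (l.getLast h) (l.head h) ∧ l.Nodup

/-- `l` is (the vertex list of) a simple directed path from `X₁` to `X₂` in the exchange
graph `𝓔(M₁,M₂,I)`. -/
def IsXPath {α : Type*} [DecidableEq α] (M₁ M₂ : Matroid α) (I : Finset α) (l : List α) : Prop :=
  ∃ h : l ≠ [], l.Chain' (ExchAdj M₁ M₂ I) ∧ l.Nodup ∧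
    memX M₁ I (l.head h) ∧ memX M₂ I (l.getLast h)

/-- `I` is a minimum-weight common independent set of size `k` (not necessarily unique). -/
def IsMinWtOfSize {α : Type*} (M₁ M₂ : Matroid α) (W : α → ℤ) (k : ℕ) (I : Finset α) : Prop :=
  CommonIndep M₁ M₂ I ∧ I.card = k ∧
    ∀ J : Finset α, CommonIndep M₁ M₂ J → J.card = k → setW W I ≤ setW W J

/-- `W` isolates the size-`k` common independent set `I`: `I` is the unique minimum-weight
common independent set of size `k`. -/
def Isolates {α : Type*} (M₁ M₂ : Matroid α) (W : α → ℤ) (k : ℕ) (I : Finset α) : Prop :=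
  CommonIndep M₁ M₂ I ∧ I.card = k ∧
    ∀ J : Finset α, CommonIndep M₁ M₂ J → J.card = k → J ≠ I → setW W I < setW W J

theorem succ_mod_a (k m : ℕ) (h : k % m + 1 = m) : (k + 1) % m = 0 := by
  rw [← Nat.mod_add_mod, h, Nat.mod_self]

theorem succ_mod_b (k m : ℕ) (hm : 0 < m) (h : ¬ k % m + 1 = m) :
    (k + 1) % m = k % m + 1 := by
  rw [← Nat.mod_add_mod]
  have := Nat.mod_lt k hm
  exact Nat.mod_eq_of_lt (by omega)

theorem exch_indep {α ι β : Type*} [Fintype α] [DecidableEq α] [LinearOrder β]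
    (M : Matroid α) (hE : M.E = Set.univ) (I J : Finset α) (hI : M.Indep ↑I)
    (s : Finset ι) (x y : ι → α) (r : ι → β)
    (hedge : ∀ i ∈ s, M.Indep ↑(insert (x i) (I.erase (y i))))
    (hx : ∀ i ∈ s, x i ∉ I)
    (hch : ∀ i ∈ s, ∀ j ∈ s, i ≠ j → M.Indep ↑(insert (x j) (I.erase (y i))) → r j < r i)
    (hJ : ∀ z ∈ J, (z ∈ I ∧ ∀ k ∈ s, z ≠ y k) ∨ ∃ k ∈ s, z = x k) : M.Indep ↑J := by
  classical
  by_contra hdep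
  have hdep' : M.Dep ↑J := by
    rw [Matroid.dep_iff]; exact ⟨hdep, by rw [hE]; exact Set.subset_univ _⟩
  obtain ⟨C, hCJ, hC⟩ := hdep'.exists_isCircuit_subset
  have hne : (s.filter (fun k => x k ∈ C)).Nonempty := by
    by_contra hemp
    rw [Finset.not_nonempty_iff_eq_empty] at hemp
    refine hC.not_indep (hI.subset ?_)
    intro z hz
    rcases hJ z (hCJ hz) with h | ⟨k, hk, rfl⟩
    · exact h.1
    · have : k ∈ s.filter (fun k => x k ∈ C) := by simp [hk, hz]
      rw [hemp] at this
      simp at this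
  obtain ⟨j, hj, hmin⟩ := Finset.exists_min_image _ r hne
  rw [Finset.mem_filter] at hj
  have hIj : M.Indep (↑(I.erase (y j)) : Set α) := hI.subset (by simp)
  have hmem : x j ∈ M.closure (C \ {x j}) := hC.mem_closure_sdiff_singleton_of_mem hj.2
  have hsub : C \ {x j} ⊆ M.closure ↑(I.erase (y j)) := by
    rintro z ⟨hz, hzx⟩
    rcases hJ z (hCJ hz) with h | ⟨k, hk, rfl⟩
    · apply M.subset_closure _ (by rw [hE]; exact Set.subset_univ _)
      simp [h.1, h.2 j hj.1]
    · have hjk : j ≠ k := by rintro rfl; exact hzx rfl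
      by_contra hcl
      have : M.Indep ↑(insert (x k) (I.erase (y j))) := by
        rw [Finset.coe_insert]
        rw [hIj.insert_indep_iff]
        left
        exact ⟨by rw [hE]; trivial, hcl⟩
      have h1 := hch j hj.1 k hk hjk this
      have h2 := hmin k (by simp [hk, hz])
      exact absurd h1 (not_lt.mpr h2)
  have hmem2 : x j ∈ M.closure ↑(I.erase (y j)) :=
    M.closure_subset_closure_of_subset_closure hsub hmem
  have h3 := hedge j hj.1
  rw [Finset.coe_insert, hIj.insert_indep_iff] at h3
  rcases h3 with h3 | h3
  · exact h3.2 hmem2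
  · exact hx j hj.1 (Finset.mem_of_mem_erase h3)

theorem setW_symm {α : Type*} [DecidableEq α] (W : α → ℤ) (I C : Finset α) :
    setW W ((I \ C) ∪ (C \ I)) = setW W I + ∑ z ∈ C, exchWt W I z := by
  unfold setW exchWt
  rw [Finset.sum_union (by
    rw [Finset.disjoint_left]; intro a; simp only [Finset.mem_sdiff]; tauto)]
  rw [Finset.sum_ite, ← Finset.sum_inter_add_sum_sdiff I C]
  rw [Finset.sum_neg_distrib, Finset.filter_mem_eq_inter, Finset.inter_comm C I,
    Finset.filter_notMem_eq_sdiff]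
  ring

theorem per_cycle {α : Type*} [Fintype α] [DecidableEq α]
    (M₁ M₂ : Matroid α) (hE₁ : M₁.E = Set.univ) (hE₂ : M₂.E = Set.univ)
    (W : α → ℤ) (k : ℕ) (I : Finset α) (hIk : IsMinWtOfSize M₁ M₂ W k I) (N : ℕ) :
    ∀ v : ℕ → α, 0 < N → (∀ k, v (k + N) = v k) → (∀ k, ExchAdj M₁ M₂ I (v k) (v (k+1))) →
      Set.InjOn v (Set.Iio N) → 0 ≤ ∑ k ∈ Finset.range N, exchWt W I (v k) := by
  induction N using Nat.strong_induction_on with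
  | _ N ih =>
  intro v hN hper hadj hinj
  by_contra hneg
  push Not at hneg
  set P : ℕ → ℤ := fun m => ∑ k ∈ Finset.range m, exchWt W I (v k) with hP
  have hPN : ∀ m, P (m + N) = P m + P N := by
    intro m
    induction m with
    | zero => simp [hP]
    | succ m ihm =>
      have e1 : P (m + 1 + N) = P (m + N) + exchWt W I (v (m+N)) := by
        rw [show m + 1 + N = (m + N) + 1 by ring]; exact Finset.sum_range_succ _ _
      have e2 : P (m + 1) = P m + exchWt W I (v m) := Finset.sum_range_succ _ _
      rw [e1, e2, hper, ihm]; ring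
  have hmod : ∀ m, v (m % N) = v m := by
    intro m
    have : Function.Periodic v N := hper
    exact this.map_mod_nat m
  have hinj' : ∀ p q, v p = v q → p % N = q % N := by
    intro p q h
    rw [← hmod p, ← hmod q] at h
    exact hinj (Nat.mod_lt _ hN) (Nat.mod_lt _ hN) h
  -- chords
  have hchord : ∀ i j, j ≤ i → i + 1 < j + N → ExchAdj M₁ M₂ I (v i) (v j) →
      P j ≤ P (i + 1) := by
    intro i j hji hlt hA
    have hm : 0 < i + 1 - j := by omega
    have := ih (i + 1 - j) (by omega) (fun k => v (j + k % (i + 1 - j))) hm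
      (by intro k; simp) (by
        intro k
        show ExchAdj M₁ M₂ I (v (j + k % (i + 1 - j))) (v (j + (k+1) % (i + 1 - j)))
        have hk := Nat.mod_lt k hm
        by_cases hc : k % (i + 1 - j) + 1 = i + 1 - j
        · have : (k + 1) % (i + 1 - j) = 0 := succ_mod_a _ _ hc
          rw [this, show j + k % (i + 1 - j) = i by omega]
          exact hA
        · have : (k + 1) % (i + 1 - j) = k % (i + 1 - j) + 1 := succ_mod_b _ _ hm hc
          rw [this]
          exact hadj _) (by
        intro p hp q hq h
        simp only [Set.mem_Iio] at hp hq
        simp only [Nat.mod_eq_of_lt hp, Nat.mod_eq_of_lt hq] at h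
        have h' := hinj' _ _ h
        have h2 : p ≡ q [MOD N] := Nat.ModEq.add_left_cancel' j h'
        exact h2.eq_of_lt_of_lt (by omega) (by omega))
    have h2 : ∑ k ∈ Finset.range (i + 1 - j), exchWt W I (v (j + k % (i + 1 - j)))
        = P (i+1) - P j := by
      rw [eq_sub_iff_add_eq, add_comm]
      have : P (i + 1) = P (j + (i + 1 - j)) := by congr 1; omega
      rw [this]
      simp only [hP]
      rw [Finset.sum_range_add]
      congr 1
      apply Finset.sum_congr rfl
      intro t ht
      rw [Nat.mod_eq_of_lt (Finset.mem_range.mp ht)]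
    rw [h2] at this
    linarith
  have hrank : ∀ p < N, ∀ q < N, p ≠ q → ExchAdj M₁ M₂ I (v p) (v (q+1)) →
      toLex (P (q+1), q) < toLex (P (p+1), p) := by
    intro p hp q hq hpq hA
    rw [Prod.Lex.toLex_lt_toLex]
    rcases lt_or_gt_of_ne hpq with h | h
    · left
      have h1 := hchord (p + N) (q + 1) (by omega) (by omega) (by rw [hper]; exact hA)
      rw [show p + N + 1 = (p + 1) + N by ring, hPN] at h1
      show P (q+1) < P (p+1)
      have : P N < 0 := hneg
      linarith
    · have h1 := hchord p (q + 1) (by omega) (by omega) hA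
      rcases h1.lt_or_eq with h2 | h2
      · left; exact h2
      · right; exact ⟨h2, h⟩
  have halt : ∀ m, v m ∈ I ↔ v (m+1) ∉ I := by
    intro m
    rcases hadj m with h | h
    · simp [h.1, h.2.1]
    · simp [h.1, h.2.1]
  have hpred : ∀ m < N, ∃ p < N, v (p + 1) = v m := by
    intro m hm
    rcases m with _ | m
    · refine ⟨N - 1, by omega, ?_⟩
      rw [show N - 1 + 1 = 0 + N by omega, hper]
    · exact ⟨m, by omega, rfl⟩
  set C : Finset α := (Finset.range N).image v with hCdef
  have hCmem : ∀ m, v m ∈ C := by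
    intro m
    rw [← hmod m]
    exact Finset.mem_image_of_mem _ (Finset.mem_range.mpr (Nat.mod_lt _ hN))
  have hCsum : ∀ f : α → ℤ, ∑ z ∈ C, f z = ∑ k ∈ Finset.range N, f (v k) := by
    intro f
    rw [hCdef, Finset.sum_image]
    intro p hp q hq h
    exact hinj (by simpa using hp) (by simpa using hq) h
  set J : Finset α := (I \ C) ∪ (C \ I) with hJdef
  have hJ1 : M₁.Indep ↑J := by
    refine exch_indep M₁ hE₁ I J hIk.1.1 ((Finset.range N).filter (fun k => v k ∈ I))
      (fun k => v (k+1)) v (fun p => toLex (P (p+1), p)) ?_ ?_ ?_ ?_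
    · intro i hi
      rw [Finset.mem_filter] at hi
      rcases hadj i with h | h
      · exact h.2.2
      · exact absurd hi.2 h.1
    · intro i hi
      rw [Finset.mem_filter] at hi
      exact (halt i).1 hi.2
    · intro i hi j hj hij h
      rw [Finset.mem_filter, Finset.mem_range] at hi hj
      exact hrank i hi.1 j hj.1 hij (Or.inl ⟨hi.2, (halt j).1 hj.2, h⟩)
    · intro z hz
      rw [hJdef, Finset.mem_union, Finset.mem_sdiff, Finset.mem_sdiff] at hz
      rcases hz with ⟨h1, h2⟩ | ⟨h1, h2⟩
      · left
        refine ⟨h1, ?_⟩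
        rintro k - rfl
        exact h2 (hCmem k)
      · right
        rw [hCdef, Finset.mem_image] at h1
        obtain ⟨m, hm, rfl⟩ := h1
        obtain ⟨p, hp, hpm⟩ := hpred m (Finset.mem_range.mp hm)
        refine ⟨p, ?_, hpm.symm⟩
        rw [Finset.mem_filter, Finset.mem_range]
        exact ⟨hp, (halt p).2 (by rw [hpm]; exact h2)⟩
  have hJ2 : M₂.Indep ↑J := by
    refine exch_indep M₂ hE₂ I J hIk.1.2 ((Finset.range N).filter (fun k => v k ∉ I))
      v (fun k => v (k+1)) (fun p => OrderDual.toDual (toLex (P (p+1), p))) ?_ ?_ ?_ ?_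
    · intro i hi
      rw [Finset.mem_filter] at hi
      rcases hadj i with h | h
      · exact absurd h.1 hi.2
      · exact h.2.2
    · intro i hi
      rw [Finset.mem_filter] at hi
      exact hi.2
    · intro i hi j hj hij h
      rw [Finset.mem_filter, Finset.mem_range] at hi hj
      rw [OrderDual.toDual_lt_toDual]
      refine hrank j hj.1 i hi.1 hij.symm (Or.inr ⟨hj.2, ?_, h⟩)
      by_contra hh
      exact hi.2 ((halt i).2 hh)
    · intro z hz
      rw [hJdef, Finset.mem_union, Finset.mem_sdiff, Finset.mem_sdiff] at hz
      rcases hz with ⟨h1, h2⟩ | ⟨h1, h2⟩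
      · left
        refine ⟨h1, ?_⟩
        rintro k - rfl
        exact h2 (hCmem _)
      · right
        rw [hCdef, Finset.mem_image] at h1
        obtain ⟨m, hm, rfl⟩ := h1
        exact ⟨m, by rw [Finset.mem_filter]; exact ⟨hm, h2⟩, rfl⟩
  have hw : ∀ W' : α → ℤ, setW W' J = setW W' I +
      ∑ k ∈ Finset.range N, exchWt W' I (v k) := by
    intro W'
    rw [hJdef, setW_symm, hCsum]
  have hcard : J.card = k := by
    have h1 := hw (fun _ => 1)
    have h2 : ∑ k ∈ Finset.range N, exchWt (fun _ => 1) I (v k) = 0 := by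
      have e : ∀ k, exchWt (fun _ => 1) I (v (k+1)) = - exchWt (fun _ => 1) I (v k) := by
        intro k
        unfold exchWt
        have := halt k
        by_cases h : v k ∈ I
        · simp [h, this.1 h]
        · have h' : v (k+1) ∈ I := by by_contra hh; exact h (this.2 hh)
          simp [h, h']
      have s1 := Finset.sum_range_succ (fun k => exchWt (fun _ => 1) I (v k)) N
      have s2 := Finset.sum_range_succ' (fun k => exchWt (fun _ => 1) I (v k)) N
      have h0 : v N = v 0 := by simpa using hper 0
      simp only [e, Finset.sum_neg_distrib, h0] at s1 s2
      linarith
    rw [h2] at h1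
    unfold setW at h1
    simp at h1
    rw [h1]; exact hIk.2.1
  have hfin := hIk.2.2 J ⟨hJ1, hJ2⟩ hcard
  rw [hw W] at hfin
  linarith

/-- If `I_k` is a minimum-weight size-`k` common independent set of matroids `M₁`, `M₂`
(not necessarily unique), then the exchange graph `𝓔(M₁,M₂,I_k)` contains no directed cycle
of negative weight with respect to the vertex weights `l`. -/
theorem no_negative_cycle {α : Type*} [Fintype α] [DecidableEq α]
    (M₁ M₂ : Matroid α) (hE₁ : M₁.E = Set.univ) (hE₂ : M₂.E = Set.univ)
    (W : α → ℤ) (k : ℕ) (Ik : Finset α) (hIk : IsMinWtOfSize M₁ M₂ W k Ik) :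
    ∀ l : List α, IsCycle (ExchAdj M₁ M₂ Ik) l → 0 ≤ listW W Ik l := by
  rintro l ⟨hne, hch, hlast, hnd⟩
  have hN : 0 < l.length := List.length_pos_of_ne_nil hne
  have hlt : ∀ k, k % l.length < l.length := fun k => Nat.mod_lt _ hN
  have key := per_cycle M₁ M₂ hE₁ hE₂ W k Ik hIk l.length
    (fun k => l[k % l.length]'(hlt k)) hN (by intro k; simp) (by
      intro k
      have hk := hlt k
      by_cases hc : k % l.length + 1 = l.length
      · have h0 := succ_mod_a k l.length hc
        simp only [h0]
        rw [List.getLast_eq_getElem, List.head_eq_getElem] at hlast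
        have h1 : k % l.length = l.length - 1 := by omega
        simp only [h1]
        exact hlast
      · have h0 := succ_mod_b k l.length hN hc
        simp only [h0]
        exact List.isChain_iff_getElem.mp hch _ (by omega)) (by
      intro p hp q hq h
      simp only [Set.mem_Iio] at hp hq
      simp only [Nat.mod_eq_of_lt hp, Nat.mod_eq_of_lt hq] at h
      exact (hnd.getElem_inj_iff).1 h)
  have : listW W Ik l = ∑ k ∈ Finset.range l.length,
      exchWt W Ik (l[k % l.length]'(hlt k)) := by
    unfold listW
    rw [Finset.sum_range, ← List.sum_ofFn]
    congr 1
    apply List.ext_getElem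
    · simp
    · intro i h1 h2
      simp at h1
      simp [Nat.mod_eq_of_lt h1]
  rw [this]
  exact key
end

section
/- Let I_k be a minimum-weight common independent set of size k of matroids M₁ and M₂, and let P be a directed path from X₁ to X₂ in the exchange graph 𝓔(M₁,M₂,I_k) of minimum weight, and of minimum hop-length among the X₁–X₂ paths of minimum weight. Then the symmetric difference I_k Δ V(P) of I_k with the vertex set of P is a common independent set of size k+1, and it is a minimum-weight common independent set of size k+1. -/
theorem minIndep_aux {α : Type*} [Fintype α] [DecidableEq α] (M : Matroid α)
    (hE : M.E = Set.univ) (I : Finset α) (hI : M.Indep ↑I) (U : α → ℤ)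
    (hex : ∀ y ∈ I, ∀ x, x ∉ I → M.Indep ↑(insert x (I.erase y)) → U y ≤ U x)
    (h0 : ∀ y ∈ I, U y ≤ 0) (hX : ∀ x, memX M I x → 0 ≤ U x) :
    ∀ (n : ℕ) (J : Finset α), (J \ I).card = n → M.Indep ↑J → setW U I ≤ setW U J := by
  intro n
  induction n with
  | zero =>
    intro J hn hJ
    have hs : J ⊆ I := by
      rw [Finset.card_eq_zero, Finset.sdiff_eq_empty_iff_subset] at hn; exact hn
    unfold setW
    rw [← Finset.sum_sdiff hs]
    have : ∑ x ∈ I \ J, U x ≤ 0 := Finset.sum_nonpos (fun y hy => h0 y (Finset.mem_sdiff.1 hy).1)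
    linarith
  | succ n ih =>
    intro J hn hJ
    obtain ⟨x, hx⟩ : (J \ I).Nonempty := by rw [← Finset.card_pos]; omega
    obtain ⟨hxJ, hxI⟩ := Finset.mem_sdiff.1 hx
    have hJx : M.Indep ↑(J.erase x) := hJ.subset (by simp)
    have hcard : ((J.erase x) \ I).card = n := by
      rw [Finset.erase_sdiff_comm, Finset.card_erase_of_mem hx, hn]; rfl
    have hsum : setW U J = setW U (J.erase x) + U x := by
      unfold setW; rw [Finset.sum_erase_add _ _ hxJ]
    by_cases hi : M.Indep ↑(insert x I)
    · have := ih (J.erase x) hcard hJx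
      have := hX x ⟨hxI, hi⟩
      linarith
    · have hxcl : x ∈ M.closure ↑I := by
        by_contra hc
        apply hi
        rw [Finset.coe_insert]
        exact (hI.notMem_closure_iff_of_notMem (by simpa using hxI) (by simp [hE])).1 hc
      have hC := hI.fundCircuit_isCircuit hxcl (by simpa using hxI)
      have hxC : x ∉ M.closure (↑(J.erase x) : Set α) := by
        rw [hJx.notMem_closure_iff_of_notMem (by simp) (by simp [hE])]
        rw [← Finset.coe_insert, Finset.insert_erase hxJ]; exact hJ
      obtain ⟨y, hyC, hy⟩ : ∃ y ∈ M.fundCircuit x ↑I \ {x}, y ∉ M.closure (↑(J.erase x) : Set α) := by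
        by_contra! hcon
        apply hxC
        have h1 := hC.mem_closure_sdiff_singleton_of_mem (M.mem_fundCircuit x ↑I)
        exact M.closure_subset_closure_of_subset_closure hcon h1
      have hyI : y ∈ I := by
        have := M.fundCircuit_subset_insert x ↑I hyC.1
        rcases this with h | h
        · exact absurd h hyC.2
        · simpa using h
      have hyx : y ≠ x := by rintro rfl; exact hxI hyI
      have hyJ : y ∉ J.erase x := fun h =>
        hy (M.mem_closure_of_mem (Finset.mem_coe.2 h) (by simp [hE]))
      have hins : M.Indep ↑(insert y (J.erase x)) := by
        rw [Finset.coe_insert]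
        exact (hJx.notMem_closure_iff_of_notMem (fun h => hyJ (Finset.mem_coe.1 h)) (by simp [hE])).1 hy
      have hle : U y ≤ U x := by
        apply hex y hyI x hxI
        have := (hI.mem_fundCircuit_iff hxcl (by simpa using hxI)).1 hyC.1
        refine this.subset ?_
        intro z hz
        simp only [Finset.coe_insert, Finset.coe_erase, Set.mem_insert_iff, Set.mem_sdiff,
          Set.mem_singleton_iff, Finset.mem_coe] at hz ⊢
        grind
      have := ih (insert y (J.erase x)) (by rw [Finset.insert_sdiff_of_mem _ hyI]; exact hcard) hins
      have h2 : setW U (insert y (J.erase x)) = U y + setW U (J.erase x) := by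
        unfold setW; rw [Finset.sum_insert hyJ]
      linarith

theorem minIndep {α : Type*} [Fintype α] [DecidableEq α] (M : Matroid α)
    (hE : M.E = Set.univ) (I : Finset α) (hI : M.Indep ↑I) (U : α → ℤ) (c : ℤ)
    (hex : ∀ y ∈ I, ∀ x, x ∉ I → M.Indep ↑(insert x (I.erase y)) → U y ≤ U x)
    (h0 : ∀ y ∈ I, U y ≤ c) (hX : ∀ x, memX M I x → c ≤ U x) (J : Finset α)
    (hJ : M.Indep ↑J) (hc : J.card = I.card + 1) : setW U I + c ≤ setW U J := by
  have := minIndep_aux M hE I hI (fun v => U v - c)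
    (fun y hy x hx h => by have := hex y hy x hx h; linarith)
    (fun y hy => by have := h0 y hy; linarith)
    (fun x hx => by have := hX x hx; linarith) _ J rfl hJ
  unfold setW at *
  simp only [Finset.sum_sub_distrib, Finset.sum_const, hc, nsmul_eq_mul] at this
  push_cast at this
  linarith

theorem tri_exchange {α ι R : Type*} [LinearOrder R] [DecidableEq ι] (M : Matroid α)
    (hE : M.E = Set.univ) (x y : ι → α) (r : ι → R) :
    ∀ (n : ℕ) (s : Finset ι) (B : Set α), s.card = n → M.Indep B →
    (∀ i ∈ s, y i ∈ B) → (∀ i ∈ s, x i ∉ B) →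
    (∀ i ∈ s, ∀ j ∈ s, y i = y j → i = j) → (∀ i ∈ s, ∀ j ∈ s, x i = x j → i = j) →
    (∀ i ∈ s, ∀ j ∈ s, r i = r j → i = j) →
    (∀ i ∈ s, x i ∉ M.closure (B \ {y i})) →
    (∀ i ∈ s, ∀ j ∈ s, r i < r j → x j ∈ M.closure (B \ {y i})) →
    M.Indep ((B \ (y '' s)) ∪ x '' s) := by
  intro n
  induction n with
  | zero =>
    intro s B hn hB _ _ _ _ _ _ _
    rw [Finset.card_eq_zero] at hn
    subst hn; simpa using hB
  | succ n ih =>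
    intro s B hn hB hy hx hyi hxi hri hd ht
    obtain ⟨i, his, hmin⟩ := s.exists_min_image r (by rw [← Finset.card_pos]; omega)
    have hlt : ∀ j ∈ s.erase i, r i < r j := fun j hj =>
      lt_of_le_of_ne (hmin j (Finset.mem_of_mem_erase hj))
        (fun h => (Finset.ne_of_mem_erase hj) (hri i his j (Finset.mem_of_mem_erase hj) h).symm)
    have hBy : M.Indep (B \ {y i}) := hB.subset Set.sdiff_subset
    have hB' : M.Indep (insert (x i) (B \ {y i})) :=
      (hBy.notMem_closure_iff_of_notMem (fun h => hx i his h.1) (by simp [hE])).1 (hd i his)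
    have hsub : ∀ j ∈ s.erase i, j ∈ s := fun j hj => Finset.mem_of_mem_erase hj
    have key := ih (s.erase i) (insert (x i) (B \ {y i})) (by rw [Finset.card_erase_of_mem his, hn]; rfl) hB'
      (fun j hj => Or.inr ⟨hy j (hsub j hj), fun h => Finset.ne_of_mem_erase hj (hyi _ (hsub j hj) _ his h)⟩)
      (fun j hj h => by
        rcases h with h | h
        · exact Finset.ne_of_mem_erase hj (hxi _ (hsub j hj) _ his h)
        · exact hx j (hsub j hj) h.1)
      (fun a ha b hb => hyi a (hsub a ha) b (hsub b hb))
      (fun a ha b hb => hxi a (hsub a ha) b (hsub b hb))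
      (fun a ha b hb => hri a (hsub a ha) b (hsub b hb))
      (fun j hj h => by
        have h1 := ht i his j (hsub j hj) (hlt j hj)
        apply hd j (hsub j hj)
        have hind : M.Indep ((insert (x i) (B \ {y i}) \ {y j}) ∪ (B \ {y i})) :=
          hB'.subset (by intro z hz; simp only [Set.mem_union, Set.mem_sdiff, Set.mem_insert_iff] at hz ⊢; tauto)
        have h2 : x j ∈ M.closure ((insert (x i) (B \ {y i}) \ {y j}) ∩ (B \ {y i})) := by
          rw [hind.closure_inter_eq_inter_closure]; exact ⟨h, h1⟩
        refine M.closure_subset_closure ?_ h2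
        intro z hz
        simp only [Set.mem_inter_iff, Set.mem_sdiff, Set.mem_insert_iff] at hz ⊢; tauto)
      (fun a ha b hb hab => by
        have h1 := ht i his b (hsub b hb) (hlt b hb)
        have h2 := ht a (hsub a ha) b (hsub b hb) hab
        have hind : M.Indep ((B \ {y i}) ∪ (B \ {y a})) :=
          hB.subset (by intro z hz; simp only [Set.mem_union, Set.mem_sdiff] at hz; tauto)
        have h3 : x b ∈ M.closure ((B \ {y i}) ∩ (B \ {y a})) := by
          rw [hind.closure_inter_eq_inter_closure]; exact ⟨h1, h2⟩
        refine M.closure_subset_closure ?_ h3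
        intro z hz
        simp only [Set.mem_inter_iff, Set.mem_sdiff, Set.mem_insert_iff] at hz ⊢; tauto)
    refine key.subset ?_
    rintro z (⟨hzB, hz⟩ | ⟨j, hj, rfl⟩)
    · left
      refine ⟨Or.inr ⟨hzB, fun h => hz ⟨i, his, h.symm⟩⟩, ?_⟩
      rintro ⟨j, hj, rfl⟩
      exact hz ⟨j, hsub j hj, rfl⟩
    · by_cases hji : j = i
      · subst hji
        left
        refine ⟨Or.inl rfl, ?_⟩
        rintro ⟨a, ha, h⟩
        exact hx j hj (h ▸ hy a (hsub a ha))
      · right; exact ⟨j, Finset.mem_erase.2 ⟨hji, hj⟩, rfl⟩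

structure Feas {α : Type*} [DecidableEq α] (M₁ M₂ : Matroid α) (I : Finset α)
    (U₁ U₂ : α → ℤ) (D₁ D₂ : ℤ) : Prop where
  e1 : ∀ y ∈ I, ∀ x, x ∉ I → M₁.Indep ↑(insert x (I.erase y)) → U₁ y ≤ U₁ x
  e2 : ∀ y ∈ I, ∀ x, x ∉ I → M₂.Indep ↑(insert x (I.erase y)) → U₂ y ≤ U₂ x
  x1 : ∀ x, memX M₁ I x → D₁ ≤ U₁ x
  x2 : ∀ x, memX M₂ I x → D₂ ≤ U₂ x

def TAdj {α : Type*} [DecidableEq α] (M₁ M₂ : Matroid α) (I : Finset α) (U₁ U₂ : α → ℤ)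
    (u v : α) : Prop :=
  ExchAdj M₁ M₂ I u v ∧ (u ∈ I → U₁ u = U₁ v) ∧ (v ∈ I → U₂ u = U₂ v)

def headF {α : Type*} [DecidableEq α] (I : Finset α) (U₁ U₂ : α → ℤ) (v : α) : ℤ :=
  if v ∈ I then - U₂ v else U₁ v

theorem listW_cons {α : Type*} [DecidableEq α] (W : α → ℤ) (I : Finset α) (v : α) (l : List α) :
    listW W I (v :: l) = exchWt W I v + listW W I l := by simp [listW]

theorem chain_ge {α : Type*} [DecidableEq α] {M₁ M₂ : Matroid α} {I : Finset α}
    {W U₁ U₂ : α → ℤ} {D₁ D₂ : ℤ} (hW : ∀ v, W v = U₁ v + U₂ v) (hF : Feas M₁ M₂ I U₁ U₂ D₁ D₂) :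
    ∀ (l : List α) (v : α), (v :: l).IsChain (ExchAdj M₁ M₂ I) →
      (v :: l).getLast (by simp) ∉ I → D₂ ≤ U₂ ((v :: l).getLast (by simp)) →
      headF I U₁ U₂ v + D₂ ≤ listW W I (v :: l) ∧
      (listW W I (v :: l) ≤ headF I U₁ U₂ v + D₂ →
        (v :: l).IsChain (TAdj M₁ M₂ I U₁ U₂) ∧ U₂ ((v :: l).getLast (by simp)) = D₂) := by
  intro l
  induction l with
  | nil =>
    intro v _ hv hD
    simp only [List.getLast_singleton] at hv hD
    simp only [listW, headF, exchWt, hv, if_false, List.map_cons, List.map_nil, List.sum_cons, hW,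
      List.sum_nil, List.getLast_singleton]
    refine ⟨by linarith, fun h => ⟨by simp, by linarith⟩⟩
  | cons w l ih =>
    intro v hc hv hD
    rw [List.isChain_cons_cons] at hc
    rw [List.getLast_cons (by simp)] at hv hD
    obtain ⟨h1, h2⟩ := ih w hc.2 hv hD
    rw [listW_cons, List.getLast_cons (by simp), List.isChain_cons_cons]
    rcases hc.1 with ⟨hv', hw', hi⟩ | ⟨hv', hw', hi⟩
    · have h3 := hF.e1 v hv' w hw' hi
      simp only [headF, exchWt, hv', hw', if_true, if_false, hW] at h1 h2 ⊢
      refine ⟨by linarith, fun h => ?_⟩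
      obtain ⟨h4, h5⟩ := h2 (by linarith)
      exact ⟨⟨⟨hc.1, fun _ => by linarith, fun h => absurd h hw'⟩, h4⟩, h5⟩
    · have h3 := hF.e2 w hw' v hv' hi
      simp only [headF, exchWt, hv', hw', if_true, if_false, hW] at h1 h2 ⊢
      refine ⟨by linarith, fun h => ?_⟩
      obtain ⟨h4, h5⟩ := h2 (by linarith)
      exact ⟨⟨⟨hc.1, fun h => absurd h hv', fun _ => by linarith⟩, h4⟩, h5⟩

theorem chain_tight {α : Type*} [DecidableEq α] {M₁ M₂ : Matroid α} {I : Finset α}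
    {W U₁ U₂ : α → ℤ} (hW : ∀ v, W v = U₁ v + U₂ v) :
    ∀ (l : List α) (v : α), (v :: l).IsChain (TAdj M₁ M₂ I U₁ U₂) →
      (v :: l).getLast (by simp) ∉ I →
      listW W I (v :: l) = headF I U₁ U₂ v + U₂ ((v :: l).getLast (by simp)) := by
  intro l
  induction l with
  | nil =>
    intro v _ hv
    simp only [List.getLast_singleton] at hv
    simp [listW, headF, exchWt, hv, hW]
  | cons w l ih =>
    intro v hc hv
    rw [List.isChain_cons_cons] at hc
    rw [List.getLast_cons (by simp)] at hv
    have h1 := ih w hc.2 hv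
    rw [listW_cons, List.getLast_cons (by simp), h1]
    obtain ⟨hc1, h2, h3⟩ := hc.1
    rcases hc1 with ⟨hv', hw', hi⟩ | ⟨hv', hw', hi⟩
    · have := h2 hv'
      simp only [headF, exchWt, hv', hw', if_true, if_false, hW]
      linarith
    · have := h3 hw'
      simp only [headF, exchWt, hv', hw', if_true, if_false, hW]
      linarith

theorem chain_sum {α : Type*} [DecidableEq α] {M₁ M₂ : Matroid α} {I : Finset α}
    {g : α → ℤ} :
    ∀ (l : List α) (v : α),
      (v :: l).IsChain (fun u v => ExchAdj M₁ M₂ I u v ∧ (u ∈ I → g u = g v)) →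
      (v :: l).getLast (by simp) ∉ I →
      listW g I (v :: l) = if v ∈ I then 0 else g v := by
  intro l v hc hv
  have := chain_tight (M₁ := M₁) (M₂ := M₂) (I := I) (W := g) (U₁ := g) (U₂ := fun _ => 0)
    (by simp) l v (hc.imp (fun _ _ h => ⟨h.1, h.2, fun _ => rfl⟩)) hv
  simpa [headF] using this

theorem setW_symmDiff {α : Type*} [DecidableEq α] (g : α → ℤ) (I : Finset α) (P : List α)
    (hP : P.Nodup) : setW g (symmDiff I P.toFinset) = setW g I + listW g I P := by
  have h1 : listW g I P = ∑ v ∈ P.toFinset, exchWt g I v := by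
    unfold listW; rw [List.sum_toFinset _ hP]
  have h2 : ∑ v ∈ P.toFinset, exchWt g I v
      = ∑ v ∈ P.toFinset \ I, g v - ∑ v ∈ P.toFinset ∩ I, g v := by
    unfold exchWt
    rw [Finset.sum_ite, Finset.sum_neg_distrib, Finset.filter_mem_eq_inter,
      Finset.filter_notMem_eq_sdiff]
    ring
  rw [h1, h2]
  unfold setW
  rw [symmDiff_def, Finset.sup_eq_union, Finset.sum_union]
  · rw [← Finset.sum_inter_add_sum_sdiff I P.toFinset g, Finset.inter_comm]
    ring
  · exact disjoint_sdiff_sdiff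

theorem exch_swap {α : Type*} [DecidableEq α] (M₁ M₂ : Matroid α) (I : Finset α) (u v : α) :
    ExchAdj M₂ M₁ I u v ↔ ExchAdj M₁ M₂ I v u := by
  unfold ExchAdj; tauto

theorem xpath_reverse {α : Type*} [DecidableEq α] {M₁ M₂ : Matroid α} {I : Finset α} {P : List α}
    (h : IsXPath M₁ M₂ I P) : IsXPath M₂ M₁ I P.reverse := by
  obtain ⟨hne, hc, hn, h1, h2⟩ := h
  refine ⟨by simpa using hne, ?_, by simpa using hn, by simpa using h2, by simpa using h1⟩
  show List.IsChain _ _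
  rw [List.isChain_reverse]
  exact List.IsChain.imp (fun a b h => (exch_swap _ _ _ _ _).2 h) hc

theorem listW_reverse {α : Type*} [DecidableEq α] (W : α → ℤ) (I : Finset α) (P : List α) :
    listW W I P.reverse = listW W I P := by
  simp [listW, List.sum_reverse]

/-- Tightness of a minimum path. -/
theorem xpath_tight {α : Type*} [DecidableEq α] {M₁ M₂ : Matroid α} {I : Finset α}
    {W U₁ U₂ : α → ℤ} {D₁ D₂ : ℤ} (hW : ∀ v, W v = U₁ v + U₂ v) (hF : Feas M₁ M₂ I U₁ U₂ D₁ D₂)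
    {P : List α} (hne : P ≠ []) (hP : IsXPath M₁ M₂ I P) (hD : listW W I P = D₁ + D₂) :
    P.IsChain (TAdj M₁ M₂ I U₁ U₂) ∧ U₁ (P.head hne) = D₁ ∧ U₂ (P.getLast hne) = D₂ := by
  obtain ⟨_, hc, hn, h1, h2⟩ := hP
  cases P with
  | nil => exact absurd rfl hne
  | cons v l =>
    obtain ⟨h3, h4⟩ := chain_ge hW hF l v hc h2.1 (hF.x2 _ h2)
    have h5 := hF.x1 _ h1
    have h1' := h1.1
    simp only [List.head_cons] at h5 h1' ⊢
    simp only [headF, h1', if_false] at h3 h4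
    obtain ⟨h6, h7⟩ := h4 (by linarith)
    exact ⟨h6, by linarith, h7⟩

theorem xpath_of_tight {α : Type*} [DecidableEq α] {M₁ M₂ : Matroid α} {I : Finset α}
    {W U₁ U₂ : α → ℤ} {D₁ D₂ : ℤ} (hW : ∀ v, W v = U₁ v + U₂ v)
    {Q : List α} (hne : Q ≠ []) (hn : Q.Nodup) (hc : Q.IsChain (TAdj M₁ M₂ I U₁ U₂))
    (h1 : memX M₁ I (Q.head hne)) (h2 : memX M₂ I (Q.getLast hne))
    (h3 : U₁ (Q.head hne) = D₁) (h4 : U₂ (Q.getLast hne) = D₂) :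
    IsXPath M₁ M₂ I Q ∧ listW W I Q = D₁ + D₂ := by
  refine ⟨⟨hne, List.IsChain.imp (fun _ _ h => h.1) hc, hn, h1, h2⟩, ?_⟩
  cases Q with
  | nil => exact absurd rfl hne
  | cons v l =>
    rw [chain_tight hW l v hc h2.1, h4]
    have := h1.1
    simp only [List.head_cons] at this h3
    simp [headF, this, h3]

theorem core {α : Type*} [DecidableEq α] {M₁ M₂ : Matroid α} {I : Finset α}
    (hE : M₁.E = Set.univ) (hI : M₁.Indep ↑I)
    {W U₁ U₂ : α → ℤ} {D₁ D₂ : ℤ} (hW : ∀ v, W v = U₁ v + U₂ v) (hF : Feas M₁ M₂ I U₁ U₂ D₁ D₂)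
    {P : List α} (hP : IsXPath M₁ M₂ I P) (hD : listW W I P = D₁ + D₂)
    (hmin : ∀ Q, IsXPath M₁ M₂ I Q → listW W I Q = D₁ + D₂ → P.length ≤ Q.length) :
    M₁.Indep ↑(symmDiff I P.toFinset) ∧ listW U₁ I P = D₁ ∧ listW (fun _ => 1) I P = 1 := by
  obtain ⟨hne, hc0, hn, h1, h2⟩ := id hP
  obtain ⟨hc, hU1, hU2⟩ := xpath_tight hW hF hne hP hD
  refine ⟨?_, ?_, ?_⟩
  rotate_left
  · cases P with
    | nil => exact absurd rfl hne
    | cons v l =>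
      rw [chain_sum (M₁ := M₁) (M₂ := M₂) l v (hc.imp (fun _ _ h => ⟨h.1, h.2.1⟩)) h2.1]
      have := h1.1
      simp only [List.head_cons] at this hU1
      simp [this, hU1]
  · cases P with
    | nil => exact absurd rfl hne
    | cons v l =>
      rw [chain_sum (M₁ := M₁) (M₂ := M₂) l v (hc.imp (fun _ _ h => ⟨h.1, fun _ => rfl⟩)) h2.1]
      have := h1.1
      simp only [List.head_cons] at this
      simp [this]
  have hlen : 0 < P.length := List.length_pos_iff.2 hne
  obtain ⟨f, hf⟩ : ∃ f : ℕ → α, ∀ n (h : n < P.length), f n = P[n] :=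
    ⟨fun n => P.getD n (P.head hne), fun n h => by simp [h]⟩
  have hf0 : P.head hne = f 0 := by rw [hf 0 hlen, List.head_eq_getElem]
  have hfl : P.getLast hne = f (P.length - 1) := by
    rw [hf _ (by omega), List.getLast_eq_getElem]
  have hedge : ∀ n, n + 1 < P.length → TAdj M₁ M₂ I U₁ U₂ (f n) (f (n+1)) := by
    intro n h
    rw [hf n (by omega), hf _ h]
    exact List.isChain_iff_getElem.1 hc n h
  have hinj : ∀ i j, i < P.length → j < P.length → f i = f j → i = j := by
    intro i j hi hj h
    rw [hf i hi, hf j hj] at h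
    exact (hn.getElem_inj_iff).1 h
  have hmem : ∀ v, v ∈ P ↔ ∃ n, n < P.length ∧ f n = v := by
    intro v
    rw [List.mem_iff_getElem]
    constructor
    · rintro ⟨n, h, rfl⟩; exact ⟨n, h, hf n h⟩
    · rintro ⟨n, h, rfl⟩; exact ⟨n, h, (hf n h).symm⟩
  have hpar : ∀ n, n < P.length → (f n ∈ I ↔ n % 2 = 1) := by
    intro n
    induction n with
    | zero => intro _; rw [← hf0]; simpa using h1.1
    | succ n ih =>
      intro h
      have := ih (by omega)
      rcases (hedge n h).1 with ⟨a, b, _⟩ | ⟨a, b, _⟩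
      · simp only [a, b, true_iff, false_iff] at this ⊢; omega
      · simp only [a, b, true_iff, false_iff] at this ⊢; omega
  have hdrop : ∀ n, n < P.length → memX M₁ I (f n) → U₁ (f n) = D₁ → n = 0 := by
    intro n hnl hx hU
    have hne' : P.drop n ≠ [] := by simp; omega
    have hh : (P.drop n).head hne' = f n := by rw [hf n hnl, List.head_drop]
    obtain ⟨a, b⟩ := xpath_of_tight (D₁ := D₁) (D₂ := D₂) hW hne' (hn.sublist (List.drop_sublist _ _))
      (hc.drop n) (by rw [hh]; exact hx) (by rw [List.getLast_drop]; exact h2)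
      (by rw [hh]; exact hU) (by rw [List.getLast_drop]; exact hU2)
    have := hmin _ a b
    rw [List.length_drop] at this
    omega
  have hcut : ∀ n m, n < m → m < P.length → TAdj M₁ M₂ I U₁ U₂ (f n) (f m) → m ≤ n + 1 := by
    intro n m hnm hm hT
    have hne1 : P.take (n+1) ≠ [] := by simp; exact hne
    have hne2 : P.drop m ≠ [] := by simp; omega
    have hne' : P.take (n+1) ++ P.drop m ≠ [] := by simp [hne]
    have hh : (P.take (n+1) ++ P.drop m).head hne' = P.head hne := by
      rw [List.head_append_of_ne_nil hne1, List.head_take]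
    have hl : (P.take (n+1) ++ P.drop m).getLast hne' = P.getLast hne := by
      rw [List.getLast_append_of_ne_nil _ hne2, List.getLast_drop]
    have hch : (P.take (n+1) ++ P.drop m).IsChain (TAdj M₁ M₂ I U₁ U₂) := by
      refine (hc.take _).append (hc.drop _) ?_
      intro u hu v hv
      have hu' : u = f n := by
        rw [hf n (by omega)]
        have : (P.take (n+1)).getLast hne1 = u := by
          rw [List.getLast?_eq_getLast_of_ne_nil hne1] at hu; simpa using hu
        rw [← this, List.getLast_eq_getElem, List.getElem_take]
        congr 1
        simp; omega
      have hv' : v = f m := by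
        rw [hf m hm]
        rw [List.head?_drop, List.getElem?_eq_getElem hm] at hv
        simpa using hv.symm
      rw [hu', hv']; exact hT
    have hnd : (P.take (n+1) ++ P.drop m).Nodup := by
      refine hn.sublist ?_
      conv_rhs => rw [← List.take_append_drop (n+1) P]
      refine (List.Sublist.refl _).append ?_
      exact List.drop_sublist_drop_left _ (by omega)
    obtain ⟨a, b⟩ := xpath_of_tight (D₁ := D₁) (D₂ := D₂) hW hne' hnd hch (by rw [hh]; exact h1)
      (by rw [hl]; exact h2) (by rw [hh]; exact hU1) (by rw [hl]; exact hU2)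
    have := hmin _ a b
    rw [List.length_append, List.length_drop, List.length_take] at this
    omega
  obtain ⟨t, ht⟩ : ∃ t, P.length = 2 * t + 1 := by
    have := hpar (P.length - 1) (by omega)
    rw [← hfl] at this
    have h3 := h2.1
    simp only [h3, false_iff] at this
    exact ⟨P.length / 2, by omega⟩
  rw [hf0] at h1 hU1
  have hx0 : f 0 ∉ I := h1.1
  have hxI : ∀ i, i < t → f (2*i+2) ∉ I := fun i hi h => by
    have := (hpar _ (by omega)).1 h; omega
  have hyI : ∀ i, i < t → f (2*i+1) ∈ I := fun i hi => (hpar _ (by omega)).2 (by omega)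
  have hadj : ∀ i, i < t → M₁.Indep ↑(insert (f (2*i+2)) (I.erase (f (2*i+1)))) ∧
      U₁ (f (2*i+1)) = U₁ (f (2*i+2)) := by
    intro i hi
    obtain ⟨a, b, _⟩ := hedge (2*i+1) (by omega)
    refine ⟨?_, b (hyI i hi)⟩
    rcases a with ⟨_, _, h⟩ | ⟨h, _⟩
    · exact h
    · exact absurd (hyI i hi) h
  have hyD : ∀ y ∈ I, U₁ y ≤ D₁ := by
    intro y hy
    rw [← hU1]
    apply hF.e1 y hy _ hx0
    exact h1.2.subset (by
      intro z hz; simp only [Finset.coe_insert, Finset.coe_erase, Set.mem_insert_iff, Set.mem_sdiff] at hz ⊢; tauto)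
  have hnX : ∀ i, i < t → ¬ memX M₁ I (f (2*i+2)) := by
    intro i hi hm
    have a := hF.x1 _ hm
    have b := (hadj i hi).2
    have c := hyD _ (hyI i hi)
    have := hdrop (2*i+2) (by omega) hm (by linarith)
    omega
  have hxcl : ∀ i, i < t → f (2*i+2) ∈ M₁.closure ↑I := by
    intro i hi
    by_contra hcon
    apply hnX i hi
    refine ⟨hxI i hi, ?_⟩
    rw [Finset.coe_insert]
    exact (hI.notMem_closure_iff_of_notMem (fun h => hxI i hi (Finset.mem_coe.1 h)) (by simp [hE])).1 hcon
  have hB : M₁.Indep (insert (f 0) (I : Set α)) := by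
    have := h1.2; rwa [Finset.coe_insert] at this
  have hIy : ∀ y, M₁.Indep ((I : Set α) \ {y}) := fun y => hI.subset Set.sdiff_subset
  have hncl : ∀ i j, i < t → j < t → (f (2*j+2) ∉ M₁.closure ((I : Set α) \ {f (2*i+1)}) ↔
      M₁.Indep ↑(insert (f (2*j+2)) (I.erase (f (2*i+1))))) := by
    intro i j hi hj
    rw [(hIy _).notMem_closure_iff_of_notMem (fun h => hxI j hj (Finset.mem_coe.1 h.1)) (by simp [hE])]
    rw [Finset.coe_insert, Finset.coe_erase]
  have key := tri_exchange M₁ hE (fun i => f (2*i+2)) (fun i => f (2*i+1))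
    (fun i : ℕ => toLex (-U₁ (f (2*i+2)), i)) t (Finset.range t) (insert (f 0) (I : Set α))
    (by simp) hB
    (fun i hi => Or.inr (Finset.mem_coe.2 (hyI i (Finset.mem_range.1 hi))))
    (fun i hi h => by
      rw [Finset.mem_range] at hi
      rcases h with h | h
      · have := hinj _ _ (by omega) (by omega) h; omega
      · exact hxI i hi (Finset.mem_coe.1 h))
    (fun i hi j hj h => by
      rw [Finset.mem_range] at hi hj
      have := hinj _ _ (by omega) (by omega) h; omega)
    (fun i hi j hj h => by
      rw [Finset.mem_range] at hi hj
      have := hinj _ _ (by omega) (by omega) h; omega)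
    (fun i hi j hj h => by
      have := congrArg (fun z => (ofLex z).2) h
      simpa using this)
    (fun i hi h => by
      rw [Finset.mem_range] at hi
      have hy := hyI i hi
      have hne0 : f 0 ≠ f (2*i+1) := fun h => hx0 (h ▸ hy)
      have hind : M₁.Indep ((I : Set α) ∪ (insert (f 0) (I : Set α) \ {f (2*i+1)})) :=
        hB.subset (by intro z hz; simp only [Set.mem_union, Set.mem_sdiff, Set.mem_insert_iff] at hz ⊢; tauto)
      have h3 : f (2*i+2) ∈ M₁.closure ((I : Set α) ∩ (insert (f 0) (I : Set α) \ {f (2*i+1)})) := by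
        rw [hind.closure_inter_eq_inter_closure]; exact ⟨hxcl i hi, h⟩
      refine (hncl i i hi hi).2 (hadj i hi).1 (M₁.closure_subset_closure ?_ h3)
      intro z hz
      simp only [Set.mem_inter_iff, Set.mem_sdiff, Set.mem_insert_iff] at hz ⊢; tauto)
    (fun i hi j hj h => by
      rw [Finset.mem_range] at hi hj
      by_contra hcon
      have h3 : f (2*j+2) ∉ M₁.closure ((I : Set α) \ {f (2*i+1)}) := fun h4 =>
        hcon (M₁.closure_subset_closure (by
          intro z hz
          simp only [Set.mem_sdiff, Set.mem_insert_iff] at hz ⊢; tauto) h4)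
      have h4 := (hncl i j hi hj).1 h3
      have h5 := hF.e1 _ (hyI i hi) _ (hxI j hj) h4
      have h6 := (hadj i hi).2
      rw [Prod.Lex.toLex_lt_toLex] at h
      rcases h with h | ⟨h, h'⟩
      · simp only at h; linarith
      · simp only at h h'
        have := hcut (2*i+1) (2*j+2) (by omega) (by omega)
          ⟨Or.inl ⟨hyI i hi, hxI j hj, h4⟩, fun _ => by linarith, fun h => absurd h (hxI j hj)⟩
        omega)
  refine key.subset ?_
  intro z hz
  rw [Finset.mem_coe, Finset.mem_symmDiff, List.mem_toFinset] at hz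
  rcases hz with ⟨hz, hzP⟩ | ⟨hzP, hz⟩
  · left
    refine ⟨Or.inr (Finset.mem_coe.2 hz), ?_⟩
    rintro ⟨i, hi, rfl⟩
    have hi : i < t := by simpa using hi
    exact hzP ((hmem _).2 ⟨_, by omega, rfl⟩)
  · obtain ⟨n, hnl, rfl⟩ := (hmem z).1 hzP
    have hnp : n % 2 ≠ 1 := fun h => hz ((hpar n hnl).2 h)
    by_cases hn0 : n = 0
    · left
      subst hn0
      refine ⟨Or.inl rfl, ?_⟩
      rintro ⟨i, hi, h⟩
      have hi : i < t := by simpa using hi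
      exact hx0 (h ▸ hyI i hi)
    · right
      refine ⟨n / 2 - 1, by simp; omega, ?_⟩
      show f (2 * (n/2 - 1) + 2) = f n
      congr 1; omega

def VP {α : Type*} [DecidableEq α] (M₁ M₂ : Matroid α) (I : Finset α) (v : α) (l : List α) : Prop :=
  (v :: l).IsChain (ExchAdj M₁ M₂ I) ∧ (v :: l).Nodup ∧ memX M₂ I ((v :: l).getLast (by simp))

def vcost {α : Type*} [DecidableEq α] (I : Finset α) (W W₁ W₂ : α → ℤ) (v : α) (l : List α) : ℤ :=
  listW W I (v :: l) + if v ∈ I then W₂ v else - W₁ v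

theorem vcost_cons {α : Type*} [DecidableEq α] {M₁ M₂ : Matroid α} {I : Finset α}
    {W W₁ W₂ : α → ℤ} (hW : ∀ v, W v = W₁ v + W₂ v) {u v : α} (h : ExchAdj M₁ M₂ I u v)
    (l : List α) : vcost I W W₁ W₂ u (v :: l) = vcost I W W₁ W₂ v l +
      if u ∈ I then W₁ v - W₁ u else W₂ u - W₂ v := by
  unfold vcost
  rw [listW_cons]
  rcases h with ⟨a, b, _⟩ | ⟨a, b, _⟩ <;> simp only [exchWt, a, b, if_true, if_false, hW] <;> ring

theorem vp_suffix {α : Type*} [DecidableEq α] {M₁ M₂ : Matroid α} {I : Finset α}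
    {W W₁ W₂ : α → ℤ} (hW : ∀ v, W v = W₁ v + W₂ v)
    (e1 : ∀ y ∈ I, ∀ x, x ∉ I → M₁.Indep ↑(insert x (I.erase y)) → W₁ y ≤ W₁ x)
    (e2 : ∀ y ∈ I, ∀ x, x ∉ I → M₂.Indep ↑(insert x (I.erase y)) → W₂ y ≤ W₂ x) (u : α) :
    ∀ (l : List α) (v : α), VP M₁ M₂ I v l → u ∈ v :: l →
      ∃ l', VP M₁ M₂ I u l' ∧ vcost I W W₁ W₂ u l' ≤ vcost I W W₁ W₂ v l := by
  intro l
  induction l with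
  | nil =>
    intro v hv hu
    have : u = v := by simpa using hu
    subst this
    exact ⟨[], hv, le_rfl⟩
  | cons w l ih =>
    intro v hv hu
    by_cases huv : u = v
    · subst huv; exact ⟨_, hv, le_rfl⟩
    · obtain ⟨a, b, c⟩ := hv
      rw [List.isChain_cons_cons] at a
      rw [List.getLast_cons (by simp)] at c
      obtain ⟨l', h1, h2⟩ := ih w ⟨a.2, (List.nodup_cons.1 b).2, c⟩
        ((List.mem_cons.1 hu).resolve_left huv)
      refine ⟨l', h1, h2.trans ?_⟩
      rw [vcost_cons hW a.1]
      rcases a.1 with ⟨p, q, r⟩ | ⟨p, q, r⟩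
      · have := e1 _ p _ q r
        simp only [p, if_true]; linarith
      · have := e2 _ q _ p r
        simp only [p, if_false]; linarith

theorem finite_nodup_lists {α : Type*} [Fintype α] (p : List α → Prop)
    (h : ∀ l, p l → l.Nodup) : {l | p l}.Finite := by
  refine (List.finite_length_le α (Fintype.card α)).subset ?_
  intro l hl
  exact (h l hl).length_le_card

theorem exists_feas {α : Type*} [Fintype α] [DecidableEq α] {M₁ M₂ : Matroid α} {I : Finset α}
    {W W₁ W₂ : α → ℤ} (hW : ∀ v, W v = W₁ v + W₂ v)
    (e1 : ∀ y ∈ I, ∀ x, x ∉ I → M₁.Indep ↑(insert x (I.erase y)) → W₁ y ≤ W₁ x)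
    (e2 : ∀ y ∈ I, ∀ x, x ∉ I → M₂.Indep ↑(insert x (I.erase y)) → W₂ y ≤ W₂ x)
    (D : ℤ) (hPmin : ∀ Q : List α, IsXPath M₁ M₂ I Q → D ≤ listW W I Q) :
    ∃ U₁ U₂ : α → ℤ, (∀ v, W v = U₁ v + U₂ v) ∧ Feas M₁ M₂ I U₁ U₂ D 0 := by
  obtain ⟨N, hN⟩ : ∃ N : ℤ, ∀ x, D ≤ N + W₁ x := by
    refine ⟨D + ∑ x, |W₁ x|, fun x => ?_⟩
    have h1 : |W₁ x| ≤ ∑ x, |W₁ x| :=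
      Finset.single_le_sum (f := fun x => |W₁ x|) (fun i _ => abs_nonneg _) (Finset.mem_univ x)
    have := neg_abs_le (W₁ x)
    linarith
  have hd : ∀ v, ∃ m : ℤ, m ≤ N ∧ (∀ l, VP M₁ M₂ I v l → m ≤ vcost I W W₁ W₂ v l) ∧
      (m = N ∨ ∃ l, VP M₁ M₂ I v l ∧ m = vcost I W W₁ W₂ v l) := by
    intro v
    have hfin : {l | VP M₁ M₂ I v l}.Finite :=
      finite_nodup_lists _ (fun l hl => (List.nodup_cons.1 hl.2.1).2)
    by_cases hne : {l | VP M₁ M₂ I v l}.Nonempty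
    · obtain ⟨l, hl, hmin⟩ := Set.exists_min_image _ (vcost I W W₁ W₂ v) hfin hne
      refine ⟨min N (vcost I W W₁ W₂ v l), min_le_left _ _, fun l' hl' => (min_le_right _ _).trans (hmin l' hl'), ?_⟩
      rcases min_choice N (vcost I W W₁ W₂ v l) with h | h
      · exact Or.inl h
      · exact Or.inr ⟨l, hl, h⟩
    · exact ⟨N, le_rfl, fun l hl => absurd ⟨l, hl⟩ hne, Or.inl rfl⟩
  choose d d1 d2 d3 using hd
  have tri : ∀ u v, ExchAdj M₁ M₂ I u v →
      d u ≤ d v + if u ∈ I then W₁ v - W₁ u else W₂ u - W₂ v := by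
    intro u v h
    have hnn : 0 ≤ if u ∈ I then W₁ v - W₁ u else W₂ u - W₂ v := by
      rcases h with ⟨p, q, r⟩ | ⟨p, q, r⟩
      · have := e1 _ p _ q r
        simp only [p, if_true]; linarith
      · have := e2 _ q _ p r
        simp only [p, if_false]; linarith
    rcases d3 v with h3 | ⟨l, hl, h3⟩
    · have := d1 u; linarith
    · by_cases hu : u ∈ v :: l
      · obtain ⟨l', h4, h5⟩ := vp_suffix hW e1 e2 u l v hl hu
        have := d2 u l' h4
        linarith
      · have := d2 u (v :: l) ⟨List.isChain_cons_cons.2 ⟨h, hl.1⟩, List.nodup_cons.2 ⟨hu, hl.2.1⟩,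
          by rw [List.getLast_cons (by simp)]; exact hl.2.2⟩
        rw [vcost_cons hW h] at this
        linarith
  refine ⟨fun v => W₁ v + d v, fun v => W₂ v - d v, fun v => by rw [hW]; ring, ?_, ?_, ?_, ?_⟩
  · intro y hy x hx h
    have := tri y x (Or.inl ⟨hy, hx, h⟩)
    simp only [hy, if_true] at this
    linarith
  · intro y hy x hx h
    have := tri x y (Or.inr ⟨hx, hy, h⟩)
    simp only [hx, if_false] at this
    linarith
  · intro x hx
    rcases d3 x with h3 | ⟨l, hl, h3⟩
    · have := hN x; simp only [h3]; linarith
    · have := hPmin (x :: l) ⟨by simp, hl.1, hl.2.1, hx, hl.2.2⟩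
      have hxI := hx.1
      simp only [h3, vcost, hxI, if_false]
      linarith
  · intro x hx
    have := d2 x [] ⟨by simp, by simp, by simpa using hx⟩
    have hxI := hx.1
    simp only [vcost, listW, exchWt, hxI, if_false, List.map_cons, List.map_nil, List.sum_cons,
      List.sum_nil, hW] at this
    linarith

theorem Feas.swap {α : Type*} [DecidableEq α] {M₁ M₂ : Matroid α} {I : Finset α}
    {U₁ U₂ : α → ℤ} {D₁ D₂ : ℤ} (h : Feas M₁ M₂ I U₁ U₂ D₁ D₂) : Feas M₂ M₁ I U₂ U₁ D₂ D₁ :=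
  ⟨h.e2, h.e1, h.x2, h.x1⟩

/-- weight splitting -/
structure Split {α : Type*} [DecidableEq α] (M₁ M₂ : Matroid α) (W : α → ℤ) (I : Finset α)
    (W₁ W₂ : α → ℤ) : Prop where
  sum : ∀ v, W v = W₁ v + W₂ v
  m1 : ∀ J : Finset α, M₁.Indep ↑J → J.card = I.card → setW W₁ I ≤ setW W₁ J
  m2 : ∀ J : Finset α, M₂.Indep ↑J → J.card = I.card → setW W₂ I ≤ setW W₂ J

theorem local_of_min {α : Type*} [DecidableEq α] {M : Matroid α} {I : Finset α} {U : α → ℤ}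
    (h : ∀ J : Finset α, M.Indep ↑J → J.card = I.card → setW U I ≤ setW U J) :
    ∀ y ∈ I, ∀ x, x ∉ I → M.Indep ↑(insert x (I.erase y)) → U y ≤ U x := by
  intro y hy x hx hi
  have hx' : x ∉ I.erase y := fun h => hx (Finset.mem_of_mem_erase h)
  have h1 := h _ hi (by
    rw [Finset.card_insert_of_notMem hx', Finset.card_erase_of_mem hy]
    have := Finset.card_pos.2 ⟨y, hy⟩
    omega)
  unfold setW at h1
  rw [Finset.sum_insert hx', ← Finset.sum_erase_add _ _ hy] at h1
  linarith

theorem setW_add {α : Type*} {W W₁ W₂ : α → ℤ} (h : ∀ v, W v = W₁ v + W₂ v) (I : Finset α) :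
    setW W I = setW W₁ I + setW W₂ I := by
  unfold setW
  rw [← Finset.sum_add_distrib]
  exact Finset.sum_congr rfl (fun v _ => h v)

theorem le_of_memX {α : Type*} [DecidableEq α] {M : Matroid α} {I : Finset α} {U : α → ℤ}
    (h : ∀ y ∈ I, ∀ x, x ∉ I → M.Indep ↑(insert x (I.erase y)) → U y ≤ U x) {x : α}
    (hx : memX M I x) : ∀ y ∈ I, U y ≤ U x := by
  intro y hy
  refine h y hy x hx.1 (hx.2.subset ?_)
  intro z hz; simp only [Finset.coe_insert, Finset.coe_erase, Set.mem_insert_iff, Set.mem_sdiff] at hz ⊢; tauto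

theorem augment {α : Type*} [Fintype α] [DecidableEq α] {M₁ M₂ : Matroid α}
    (hE₁ : M₁.E = Set.univ) (hE₂ : M₂.E = Set.univ) {W W₁ W₂ : α → ℤ} {I : Finset α}
    (hI : CommonIndep M₁ M₂ I) (hS : Split M₁ M₂ W I W₁ W₂)
    {P : List α} (hP : IsXPath M₁ M₂ I P)
    (hPmin : ∀ Q : List α, IsXPath M₁ M₂ I Q → listW W I P ≤ listW W I Q)
    (hPlen : ∀ Q : List α, IsXPath M₁ M₂ I Q → listW W I Q = listW W I P →
      P.length ≤ Q.length) :
    CommonIndep M₁ M₂ (symmDiff I P.toFinset) ∧ (symmDiff I P.toFinset).card = I.card + 1 ∧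
    ∃ U₁ U₂, Split M₁ M₂ W (symmDiff I P.toFinset) U₁ U₂ := by
  obtain ⟨U₁, U₂, hW, hF⟩ := exists_feas hS.sum (local_of_min hS.m1) (local_of_min hS.m2) _ hPmin
  obtain ⟨a1, b1, c1⟩ := core hE₁ hI.1 hW hF hP (by simp) (fun Q hQ h => hPlen Q hQ (by simpa using h))
  have hWs : ∀ v, W v = U₂ v + U₁ v := fun v => by rw [hW]; ring
  obtain ⟨a2, b2, c2⟩ := core hE₂ hI.2 hWs hF.swap (xpath_reverse hP)
    (by simp [listW_reverse]) (fun Q hQ h => by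
      have := hPlen Q.reverse (xpath_reverse hQ) (by rw [listW_reverse]; simpa using h)
      simpa using this)
  rw [listW_reverse] at b2
  rw [List.toFinset_reverse] at a2
  obtain ⟨hne, _, hn, h1, h2⟩ := id hP
  obtain ⟨_, t1, t2⟩ := xpath_tight hW hF hne hP (by simp)
  have hcard : (symmDiff I P.toFinset).card = I.card + 1 := by
    have := setW_symmDiff (fun _ => 1) I P hn
    rw [c1] at this
    simp only [setW, Finset.sum_const, nsmul_eq_mul, mul_one] at this
    exact_mod_cast this
  refine ⟨⟨a1, a2⟩, hcard, U₁, U₂, hW, ?_, ?_⟩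
  · intro J hJ hc
    rw [setW_symmDiff _ _ _ hn, b1]
    exact minIndep M₁ hE₁ I hI.1 U₁ _ hF.e1 (fun y hy => t1 ▸ le_of_memX hF.e1 h1 y hy) hF.x1 J hJ
      (hc.trans hcard)
  · intro J hJ hc
    rw [setW_symmDiff _ _ _ hn, b2]
    exact minIndep M₂ hE₂ I hI.2 U₂ _ hF.e2 (fun y hy => t2 ▸ le_of_memX hF.e2 h2 y hy) hF.x2 J hJ
      (hc.trans hcard)

theorem minIndep_of_bound {α : Type*} [Fintype α] [DecidableEq α] (M : Matroid α)
    (hE : M.E = Set.univ) (I : Finset α) (hI : M.Indep ↑I) (U : α → ℤ) (c : ℤ)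
    (hex : ∀ y ∈ I, ∀ x, x ∉ I → M.Indep ↑(insert x (I.erase y)) → U y ≤ U x)
    (hX : ∀ x, memX M I x → c ≤ U x) (J : Finset α)
    (hJ : M.Indep ↑J) (hc : J.card = I.card + 1) : setW U I + c ≤ setW U J := by
  obtain ⟨x, hx⟩ : ∃ x, memX M I x := by
    obtain ⟨e, he, h⟩ := hI.augment hJ (by
      rw [Set.encard_coe_eq_coe_finsetCard, Set.encard_coe_eq_coe_finsetCard, hc]
      exact_mod_cast Nat.lt_succ_self _)
    exact ⟨e, fun h' => he.2 (Finset.mem_coe.2 h'), by rw [Finset.coe_insert]; exact h⟩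
  obtain ⟨z, hz, hmin⟩ := Set.exists_min_image {x | memX M I x} U (Set.toFinite _) ⟨x, hx⟩
  have := minIndep M hE I hI U (U z) hex (le_of_memX hex hz) (fun x hx => hmin x hx) J hJ hc
  have := hX z hz
  linarith

theorem exists_xpath {α : Type*} [Fintype α] [DecidableEq α] {M₁ M₂ : Matroid α}
    (hE₁ : M₁.E = Set.univ) (hE₂ : M₂.E = Set.univ) {I J : Finset α}
    (hI : CommonIndep M₁ M₂ I) (hJ : CommonIndep M₁ M₂ J) (hc : J.card = I.card + 1) :
    ∃ P, IsXPath M₁ M₂ I P := by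
  by_contra! hcon
  obtain ⟨U₁, U₂, hW, hF⟩ := exists_feas (M₁ := M₁) (M₂ := M₂) (I := I) (W := fun _ => 0)
    (W₁ := fun _ => 0) (W₂ := fun _ => 0) (by simp) (by simp) (by simp) 1
    (fun Q hQ => absurd hQ (hcon Q))
  have h1 := minIndep_of_bound M₁ hE₁ I hI.1 U₁ 1 hF.e1 hF.x1 J hJ.1 hc
  have h2 := minIndep_of_bound M₂ hE₂ I hI.2 U₂ 0 hF.e2 hF.x2 J hJ.2 hc
  have h3 := setW_add hW I
  have h4 := setW_add hW J
  simp only [setW, Finset.sum_const_zero] at h1 h2 h3 h4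
  linarith

theorem exists_split {α : Type*} [Fintype α] [DecidableEq α] {M₁ M₂ : Matroid α}
    (hE₁ : M₁.E = Set.univ) (hE₂ : M₂.E = Set.univ) (W : α → ℤ) :
    ∀ (k : ℕ) (I : Finset α), IsMinWtOfSize M₁ M₂ W k I → ∃ W₁ W₂, Split M₁ M₂ W I W₁ W₂ := by
  intro k
  induction k with
  | zero =>
    intro I hI
    have h0 : I = ∅ := Finset.card_eq_zero.1 hI.2.1
    subst h0
    refine ⟨W, fun _ => 0, by simp, ?_, ?_⟩
    · intro J _ hJ
      rw [Finset.card_empty, Finset.card_eq_zero] at hJ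
      rw [hJ]
    · intro J _ hJ
      rw [Finset.card_empty, Finset.card_eq_zero] at hJ
      rw [hJ]
  | succ k ih =>
    intro I hI
    obtain ⟨hI1, hI2, hI3⟩ := hI
    obtain ⟨K, hKI, hK⟩ : ∃ K ⊆ I, K.card = k := Finset.exists_subset_card_eq (by omega)
    have hKc : CommonIndep M₁ M₂ K :=
      ⟨hI1.1.subset (Finset.coe_subset.2 hKI), hI1.2.subset (Finset.coe_subset.2 hKI)⟩
    obtain ⟨I₀, hI₀, hmin⟩ := Set.exists_min_image {J | CommonIndep M₁ M₂ J ∧ J.card = k}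
      (setW W) (Set.toFinite _) ⟨K, hKc, hK⟩
    obtain ⟨W₁, W₂, hS⟩ := ih I₀ ⟨hI₀.1, hI₀.2, fun J h1 h2 => hmin J ⟨h1, h2⟩⟩
    obtain ⟨P₀, hP₀⟩ := exists_xpath hE₁ hE₂ hI₀.1 hI1 (by rw [hI2, hI₀.2])
    obtain ⟨P, hP, hPm⟩ := Set.exists_min_image {l | IsXPath M₁ M₂ I₀ l}
      (fun l => toLex (listW W I₀ l, l.length))
      (finite_nodup_lists _ (fun l hl => by obtain ⟨_, _, h, _⟩ := hl; exact h)) ⟨P₀, hP₀⟩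
    obtain ⟨h1, h2, U₁, U₂, hU⟩ := augment hE₁ hE₂ hI₀.1 hS hP
      (fun Q hQ => by
        have := hPm Q hQ
        rw [Prod.Lex.toLex_le_toLex] at this
        rcases this with h | h
        · exact h.le
        · exact h.1.le)
      (fun Q hQ hw => by
        have := hPm Q hQ
        rw [Prod.Lex.toLex_le_toLex] at this
        rcases this with h | h
        · simp only [hw, lt_irrefl] at h
        · exact h.2)
    have hc : (symmDiff I₀ P.toFinset).card = I.card := by rw [h2, hI2, hI₀.2]
    have h3 := hI3 _ h1 (hc.trans hI2)
    rw [setW_add hU.sum, setW_add hU.sum] at h3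
    have h4 := hU.m1 I hI1.1 hc.symm
    have h5 := hU.m2 I hI1.2 hc.symm
    refine ⟨U₁, U₂, hU.sum, fun J hJ hJc => ?_, fun J hJ hJc => ?_⟩
    · have := hU.m1 J hJ (hJc.trans hc.symm); linarith
    · have := hU.m2 J hJ (hJc.trans hc.symm); linarith

/-- Let `I_k` be a minimum-weight size-`k` common independent set, and let `P` be an
`X₁`–`X₂` path in the exchange graph of minimum weight, of minimum hop-length among the
`X₁`–`X₂` paths of minimum weight. Then `I_k Δ V(P)` is a common independent set of size
`k+1`, and it is a minimum-weight common independent set of size `k+1`. -/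
theorem symmDiff_minPath_is_min_weight {α : Type*} [Fintype α] [DecidableEq α]
    (M₁ M₂ : Matroid α) (hE₁ : M₁.E = Set.univ) (hE₂ : M₂.E = Set.univ)
    (W : α → ℤ) (k : ℕ) (Ik : Finset α) (hIk : IsMinWtOfSize M₁ M₂ W k Ik)
    (P : List α) (hP : IsXPath M₁ M₂ Ik P)
    (hPmin : ∀ Q : List α, IsXPath M₁ M₂ Ik Q → listW W Ik P ≤ listW W Ik Q)
    (hPlen : ∀ Q : List α, IsXPath M₁ M₂ Ik Q → listW W Ik Q = listW W Ik P →
      P.length ≤ Q.length) :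
    IsMinWtOfSize M₁ M₂ W (k + 1) (symmDiff Ik P.toFinset) := by
  obtain ⟨W₁, W₂, hS⟩ := exists_split hE₁ hE₂ W k Ik hIk
  obtain ⟨h1, h2, U₁, U₂, hU⟩ := augment hE₁ hE₂ hIk.1 hS hP hPmin hPlen
  refine ⟨h1, by rw [h2, hIk.2.1], fun J hJ hJc => ?_⟩
  have hc : J.card = (symmDiff Ik P.toFinset).card := by rw [hJc, h2, hIk.2.1]
  rw [setW_add hU.sum, setW_add hU.sum]
  exact add_le_add (hU.m1 J hJ.1 hc) (hU.m2 J hJ.2 hc)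
end

section
/- Suppose W isolates a size-k common independent set I_k of matroids M₁ and M₂. Then the exchange graph 𝓔(M₁,M₂,I_k) contains no directed cycle of weight 0; consequently, every directed cycle of 𝓔(M₁,M₂,I_k) has strictly positive weight. -/
theorem indep_of_order {α : Type*} [Fintype α] [DecidableEq α] (M : Matroid α)
    (hE : M.E = Set.univ) (I J : Finset α) (hI : M.Indep ↑I) (q : α → ℤ)
    (h : ∀ x ∈ J, x ∉ I → ∃ y ∈ I, y ∉ J ∧ M.Indep ↑(insert x (I.erase y)) ∧
      ∀ x' ∈ J, x' ∉ I → x' ≠ x → q x ≤ q x' → ¬ M.Indep ↑(insert x' (I.erase y))) :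
    M.Indep ↑J := by
  classical
  by_contra hJ
  have hdep : M.Dep ↑J := ⟨hJ, by rw [hE]; exact Set.subset_univ _⟩
  obtain ⟨D, hDJ, hD⟩ := hdep.exists_isCircuit_subset
  have hne : (J.filter (fun x => x ∈ D ∧ x ∉ I)).Nonempty := by
    by_contra hcon
    rw [Finset.not_nonempty_iff_eq_empty] at hcon
    apply hD.not_indep
    apply hI.subset
    intro x hx
    by_contra hxI
    have : x ∈ J.filter (fun x => x ∈ D ∧ x ∉ I) := by
      simp only [Finset.mem_filter]
      exact ⟨hDJ hx, hx, hxI⟩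
    rw [hcon] at this
    simp at this
  obtain ⟨x, hx, hmin⟩ := Finset.exists_min_image _ q hne
  simp only [Finset.mem_filter] at hx hmin
  obtain ⟨hxJ, hxD, hxI⟩ := hx
  obtain ⟨y, hyI, hyJ, hind, hno⟩ := h x hxJ hxI
  have hIy : M.Indep ↑(I.erase y) := hI.subset (by simp)
  have hsub : D \ {x} ⊆ M.closure ↑(I.erase y) := by
    intro z hz
    have hzx : z ≠ x := by simpa using hz.2
    by_cases hzI : z ∈ I
    · apply M.subset_closure _ (by rw [hE]; exact Set.subset_univ _)
      have : z ≠ y := fun h => hyJ (h ▸ hDJ hz.1)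
      simp [hzI, this]
    · have := hno z (hDJ hz.1) hzI hzx (hmin z ⟨hDJ hz.1, hz.1, hzI⟩)
      by_contra hcl
      apply this
      rw [Finset.coe_insert]
      exact (hIy.insert_indep_iff).2 (Or.inl ⟨by rw [hE]; trivial, hcl⟩)
  have hxcl : x ∈ M.closure ↑(I.erase y) :=
    M.closure_subset_closure_of_subset_closure hsub (hD.mem_closure_sdiff_singleton_of_mem hxD)
  rw [Finset.coe_insert] at hind
  rcases hIy.insert_indep_iff.1 hind with h1 | h1
  · exact h1.2 hxcl
  · simp [hxI] at h1

theorem sum_shift (L : ℕ) (g : ℕ → ℤ) (hg : ∀ i, g (i + L) = g i) :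
    ∀ j, ∑ t ∈ Finset.range L, g (j + t) = ∑ t ∈ Finset.range L, g t := by
  intro j
  induction j with
  | zero => simp
  | succ j ih =>
    rw [← ih]
    have h1 := Finset.sum_range_succ (fun t => g (j + t)) L
    have h2 := Finset.sum_range_succ' (fun t => g (j + t)) L
    simp only [hg, add_zero] at h1 h2
    have h3 : ∀ t, g (j + 1 + t) = g (j + (t + 1)) := fun t => by congr 1; ring
    simp only [h3]
    linarith

theorem core_s4 {α : Type*} [Fintype α] [DecidableEq α]
    (M₁ M₂ : Matroid α) (hE₁ : M₁.E = Set.univ) (hE₂ : M₂.E = Set.univ)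
    (W : α → ℤ) (k : ℕ) (I : Finset α) (hiso : Isolates M₁ M₂ W k I) :
    ∀ L : ℕ, 0 < L → ∀ f : ℕ → α, (∀ i, f (i + L) = f i) →
      (∀ i, ExchAdj M₁ M₂ I (f i) (f (i + 1))) →
      (∀ i j, i < L → j < L → f i = f j → i = j) →
      0 < ∑ i ∈ Finset.range L, exchWt W I (f i) := by
  intro L
  induction L using Nat.strong_induction_on with
  | _ L IH =>
  intro hL f hper hadj hinj
  by_contra hw
  push Not at hw
  set w := ∑ i ∈ Finset.range L, exchWt W I (f i) with hwdef
  let S : ℕ → ℤ := fun i => ∑ t ∈ Finset.range i, exchWt W I (f t)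
  let P : ℕ → ℤ := fun i => L * S i - i * w
  have hfper : Function.Periodic f L := hper
  have hSadd : ∀ i m, S (i + m) = S i + ∑ t ∈ Finset.range m, exchWt W I (f (i + t)) := by
    intro i m
    exact Finset.sum_range_add (fun t => exchWt W I (f t)) i m
  have hPper : Function.Periodic P L := by
    intro i
    simp only [P]
    rw [hSadd, sum_shift L (fun i => exchWt W I (f i)) (fun i => by simp [hper])]
    push_cast
    rw [← hwdef]
    ring
  have hchord : ∀ i j, ExchAdj M₁ M₂ I (f i) (f j) → f j ≠ f (i + 1) → P j < P (i + 1) := by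
    have key : ∀ j r, r < L → ExchAdj M₁ M₂ I (f (j + r)) (f j) → f j ≠ f (j + r + 1) →
        P j < P (j + r + 1) := by
      intro j r hr ha hne
      have hm : r + 1 < L := by
        rcases Nat.lt_or_ge (r + 1) L with h | h
        · exact h
        · exfalso
          apply hne
          have : j + r + 1 = j + L := by omega
          rw [this, hper]
      have hpos := IH (r + 1) hm (Nat.succ_pos _) (fun t => f (j + t % (r + 1)))
        (by intro i; simp)
        (by
          intro i
          rcases Nat.lt_or_ge (i % (r + 1) + 1) (r + 1) with h | h
          · have : (i + 1) % (r + 1) = i % (r + 1) + 1 := by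
              rw [Nat.add_mod, Nat.mod_eq_of_lt (show 1 < r + 1 by omega), Nat.mod_eq_of_lt h]
            simp only [this]
            exact hadj _
          · have h0 : i % (r + 1) = r := by
              have : i % (r + 1) < r + 1 := Nat.mod_lt i (Nat.succ_pos r)
              omega
            have h1 : (i + 1) % (r + 1) = 0 := by
              rw [Nat.add_mod, h0]
              simp
            simp only [h0, h1]
            simpa using ha)
        (by
          intro a b ha hb hab
          simp only [Nat.mod_eq_of_lt ha, Nat.mod_eq_of_lt hb] at hab
          rw [← hfper.map_mod_nat (j + a), ← hfper.map_mod_nat (j + b)] at hab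
          have := hinj _ _ (Nat.mod_lt _ hL) (Nat.mod_lt _ hL) hab
          have h2 : a ≡ b [MOD L] := Nat.ModEq.add_left_cancel' j this
          exact Nat.ModEq.eq_of_lt_of_lt h2 (by omega) (by omega))
      have hs : ∑ t ∈ Finset.range (r + 1), exchWt W I (f (j + t % (r + 1)))
          = ∑ t ∈ Finset.range (r + 1), exchWt W I (f (j + t)) := by
        apply Finset.sum_congr rfl
        intro t ht
        rw [Nat.mod_eq_of_lt (Finset.mem_range.1 ht)]
      simp only [hs] at hpos
      have hS := hSadd j (r + 1)
      simp only [P]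
      rw [show j + r + 1 = j + (r + 1) from rfl, hS]
      push_cast
      have hL' : (0 : ℤ) < L := by exact_mod_cast hL
      have := mul_pos hL' hpos
      have h3 : ((r : ℤ) + 1) * w ≤ 0 := mul_nonpos_of_nonneg_of_nonpos (by positivity) hw
      nlinarith
    intro i j ha hne
    let r := (i + (L - j % L)) % L
    have hjL := Nat.mod_lt j hL
    have hmod : (j % L + r) % L = i % L := by
      simp only [r]
      rw [Nat.add_mod_mod]
      have : j % L + (i + (L - j % L)) = i + L := by omega
      rw [this, Nat.add_mod_right]
    have hmod' : (j % L + r + 1) % L = (i + 1) % L := by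
      rw [Nat.add_mod, hmod, ← Nat.add_mod]
    have e1 : f (j % L + r) = f i := by
      rw [← hfper.map_mod_nat, hmod, hfper.map_mod_nat]
    have e2 : f (j % L + r + 1) = f (i + 1) := by
      rw [← hfper.map_mod_nat, hmod', hfper.map_mod_nat]
    have e3 : P (j % L + r + 1) = P (i + 1) := by
      rw [← hPper.map_mod_nat, hmod', hPper.map_mod_nat]
    have e4 : f (j % L) = f j := hfper.map_mod_nat j
    have e5 : P (j % L) = P j := hPper.map_mod_nat j
    have := key (j % L) r (Nat.mod_lt _ hL) (by rw [e1, e4]; exact ha) (by rw [e2, e4]; exact hne)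
    rwa [e3, e5] at this
  let C : Finset α := (Finset.range L).image f
  have hfC : ∀ i, f i ∈ C := by
    intro i
    simp only [C, Finset.mem_image, Finset.mem_range]
    exact ⟨i % L, Nat.mod_lt _ hL, hfper.map_mod_nat i⟩
  have hidx : ∀ x, ∃ i, x ∈ C → f i = x := by
    intro x
    by_cases hx : x ∈ C
    · obtain ⟨i, -, h⟩ := Finset.mem_image.1 hx
      exact ⟨i, fun _ => h⟩
    · exact ⟨0, fun h => absurd h hx⟩
  choose idx hidx using hidx
  let J : Finset α := (I \ C) ∪ (C \ I)
  have hJC : ∀ x ∈ J, x ∉ I → x ∈ C := by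
    intro x hx hxI
    simp only [J, Finset.mem_union, Finset.mem_sdiff] at hx
    tauto
  have hsum : ∀ V : α → ℤ, setW V J = setW V I + ∑ i ∈ Finset.range L, exchWt V I (f i) := by
    intro V
    have h1 : ∑ i ∈ Finset.range L, exchWt V I (f i) = ∑ x ∈ C, exchWt V I x := by
      rw [Finset.sum_image]
      intro a ha b hb hab
      exact hinj a b (by simpa using ha) (by simpa using hb) hab
    rw [h1]
    simp only [setW, J, exchWt]
    rw [Finset.sum_union (by
      rw [Finset.disjoint_left]; intro a; simp only [Finset.mem_sdiff]; tauto)]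
    rw [Finset.sum_ite, ← Finset.sum_inter_add_sum_sdiff I C]
    have e1 : C.filter (fun x => x ∈ I) = I ∩ C := by ext; simp [and_comm]
    have e2 : C.filter (fun x => x ∉ I) = C \ I := by ext; simp
    rw [e1, e2, Finset.sum_neg_distrib]
    ring
  have hcard : J.card = I.card := by
    have h1 := hsum (fun _ => 1)
    have h2 : ∀ i, exchWt (fun _ => 1) I (f i) + exchWt (fun _ => 1) I (f (1 + i)) = 0 := by
      intro i
      rw [add_comm 1 i]
      rcases hadj i with h | h <;> simp [exchWt, h.1, h.2.1]
    have h3 := sum_shift L (fun i => exchWt (fun _ => 1) I (f i)) (fun i => by simp [hper]) 1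
    have h4 : ∑ t ∈ Finset.range L, (exchWt (fun _ => 1) I (f t) +
      exchWt (fun _ => 1) I (f (1 + t))) = 0 := Finset.sum_eq_zero (fun i _ => h2 i)
    rw [Finset.sum_add_distrib] at h4
    simp only [setW, Finset.sum_const, nsmul_eq_mul, mul_one] at h1
    have : (J.card : ℤ) = I.card := by linarith
    exact_mod_cast this
  have hJI : J ≠ I := by
    intro h
    have := hfC 0
    have h2 : f 0 ∈ J ↔ f 0 ∈ I := by rw [h]
    simp only [J, Finset.mem_union, Finset.mem_sdiff] at h2
    tauto
  have hJ1 : M₁.Indep ↑J := by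
    apply indep_of_order M₁ hE₁ I J hiso.1.1 (fun x => P (idx x))
    intro x hxJ hxI
    have hx := hidx x (hJC x hxJ hxI)
    have e : f (idx x + L - 1 + 1) = x := by
      rw [show idx x + L - 1 + 1 = idx x + L by omega, hper, hx]
    have ha := hadj (idx x + L - 1)
    rw [e] at ha
    have hy := hfC (idx x + L - 1)
    rcases ha with ha | ha
    swap
    · exact absurd ha.2.1 hxI
    refine ⟨_, ha.1, ?_, ha.2.2, ?_⟩
    · simp only [J, Finset.mem_union, Finset.mem_sdiff]
      tauto
    · intro x' hx'J hx'I hne hq hind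
      have hx' := hidx x' (hJC x' hx'J hx'I)
      have := hchord (idx x + L - 1) (idx x') (by rw [hx']; exact Or.inl ⟨ha.1, hx'I, hind⟩)
        (by rw [e, hx']; exact hne)
      rw [show idx x + L - 1 + 1 = idx x + L by omega, hPper] at this
      exact absurd hq (not_le.2 this)
  have hJ2 : M₂.Indep ↑J := by
    apply indep_of_order M₂ hE₂ I J hiso.1.2 (fun x => - P (idx x + 1))
    intro x hxJ hxI
    have hx := hidx x (hJC x hxJ hxI)
    have ha := hadj (idx x)
    rw [hx] at ha
    have hy := hfC (idx x + 1)
    rcases ha with ha | ha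
    · exact absurd ha.1 hxI
    refine ⟨_, ha.2.1, ?_, ha.2.2, ?_⟩
    · simp only [J, Finset.mem_union, Finset.mem_sdiff]
      tauto
    · intro x' hx'J hx'I hne hq hind
      have hx' := hidx x' (hJC x' hx'J hx'I)
      have := hchord (idx x') (idx x + 1) (by rw [hx']; exact Or.inr ⟨hx'I, ha.2.1, hind⟩)
        (by
          intro he
          apply hne
          rw [← hx, ← hx', ← hfper.map_mod_nat (idx x), ← hfper.map_mod_nat (idx x')]
          rw [← hfper.map_mod_nat (idx x + 1), ← hfper.map_mod_nat (idx x' + 1)] at he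
          have h1 := hinj _ _ (Nat.mod_lt _ hL) (Nat.mod_lt _ hL) he
          have h2 : idx x ≡ idx x' [MOD L] := Nat.ModEq.add_right_cancel' 1 h1
          rw [show idx x % L = idx x' % L from h2])
      linarith
  have := hiso.2.2 J ⟨hJ1, hJ2⟩ (hcard.trans hiso.2.1) hJI
  rw [hsum W] at this
  linarith

/-- If `W` isolates a size-`k` common independent set `I_k`, then the exchange graph
`𝓔(M₁,M₂,I_k)` contains no directed cycle of weight `0`; consequently, every directed
cycle of `𝓔(M₁,M₂,I_k)` has strictly positive weight. -/
theorem no_zero_cycle_of_isolates {α : Type*} [Fintype α] [DecidableEq α]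
    (M₁ M₂ : Matroid α) (hE₁ : M₁.E = Set.univ) (hE₂ : M₂.E = Set.univ)
    (W : α → ℤ) (k : ℕ) (Ik : Finset α) (hiso : Isolates M₁ M₂ W k Ik) :
    (∀ l : List α, IsCycle (ExchAdj M₁ M₂ Ik) l → listW W Ik l ≠ 0) ∧
    (∀ l : List α, IsCycle (ExchAdj M₁ M₂ Ik) l → 0 < listW W Ik l) := by
  have hpos : ∀ l : List α, IsCycle (ExchAdj M₁ M₂ Ik) l → 0 < listW W Ik l := by
    rintro l ⟨hne, hch, hlast, hnd⟩
    have hL : 0 < l.length := List.length_pos_iff.2 hne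
    have := core_s4 M₁ M₂ hE₁ hE₂ W k Ik hiso l.length hL
      (fun i => l[i % l.length]'(Nat.mod_lt _ hL)) (by intro i; simp)
      (by
        intro i
        have hi := Nat.mod_lt i hL
        rcases Nat.lt_or_ge (i % l.length + 1) l.length with h | h
        · have e : (i + 1) % l.length = i % l.length + 1 := by
            rw [Nat.add_mod, Nat.mod_eq_of_lt (show 1 < l.length by omega), Nat.mod_eq_of_lt h]
          simp only [e]
          exact List.isChain_iff_getElem.1 hch _ h
        · have h0 : i % l.length = l.length - 1 := by omega
          have h1 : (i + 1) % l.length = 0 := by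
            rw [← Nat.mod_add_mod, show i % l.length + 1 = l.length by omega, Nat.mod_self]
          simp only [h0, h1]
          rw [List.getLast_eq_getElem, List.head_eq_getElem] at hlast
          exact hlast)
      (by
        intro i j hi hj hij
        simp only [Nat.mod_eq_of_lt hi, Nat.mod_eq_of_lt hj] at hij
        exact (hnd.getElem_inj_iff).1 hij)
    have e : listW W Ik l = ∑ i ∈ Finset.range l.length,
        exchWt W Ik (l[i % l.length]'(Nat.mod_lt _ hL)) := by
      rw [listW, ← Fin.sum_univ_getElem, Finset.sum_range]
      simp only [List.getElem_map]
      refine Fintype.sum_equiv (finCongr (by simp)) _ _ ?_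
      intro i
      have hi : (i : ℕ) < l.length := by simpa using i.2
      simp [Nat.mod_eq_of_lt hi]
    rw [e]
    exact this
  exact ⟨fun l hl => (hpos l hl).ne', hpos⟩
end

section
/- Suppose W isolates a size-k common independent set I_k of matroids M₁ and M₂, let s ∈ S, and suppose the exchange graph 𝓔(M₁,M₂,I_k) contains a directed cycle through s. Let C* be a directed cycle through s of minimum weight, and of minimum hop-length among the directed cycles through s of minimum weight. Then I_k Δ V(C*) (the symmetric difference of I_k with the vertex set of C*) is a common independent set of size k, and it attains the minimum of W(I) over all size-k common independent sets I with s ∈ I Δ I_k. -/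
theorem aux_indep_exch {α ι : Type*} [DecidableEq α] [DecidableEq ι] (M : Matroid α)
    (hE : M.E = Set.univ) (I : Finset α) (hI : M.Indep ↑I) (y x : ι → α) (p : ι → ℤ)
    (F : Finset ι) (hx : ∀ i ∈ F, x i ∉ I) (hy : ∀ i ∈ F, y i ∈ I)
    (he : ∀ i ∈ F, M.Indep ↑(insert (x i) (I.erase (y i))))
    (hp : ∀ i ∈ F, ∀ j ∈ F, i ≠ j → M.Indep ↑(insert (x j) (I.erase (y i))) → p j < p i) :
    M.Indep ↑((I \ F.image y) ∪ F.image x) := by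
  induction F using Finset.induction_on_min_value p with
  | empty => simpa using hI
  | insert a F ha hmin ih =>
    have hJ := ih (fun i hi => hx i (Finset.mem_insert_of_mem hi))
      (fun i hi => hy i (Finset.mem_insert_of_mem hi))
      (fun i hi => he i (Finset.mem_insert_of_mem hi))
      (fun i hi j hj => hp i (Finset.mem_insert_of_mem hi) j (Finset.mem_insert_of_mem hj))
    have haF := Finset.mem_insert_self a F
    have hIe : M.Indep ↑(I.erase (y a)) := hI.subset (by simp)
    have hxcl : x a ∉ M.closure ↑(I.erase (y a)) := by
      have h := he a haF
      rw [Finset.coe_insert, hIe.insert_indep_iff_of_notMem (by simp [hx a haF])] at h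
      exact h.2
    have hXcl : ∀ j ∈ F, x j ∈ M.closure ↑(I.erase (y a)) := by
      intro j hj
      have hjF := Finset.mem_insert_of_mem (a := j) (b := a) hj
      by_contra hcon
      have h : M.Indep ↑(insert (x j) (I.erase (y a))) := by
        rw [Finset.coe_insert, hIe.insert_indep_iff_of_notMem (by simp [hx j hjF])]
        exact ⟨by simp [hE], hcon⟩
      have := hp a haF j hjF (by rintro rfl; exact ha hj) h
      have := hmin j hj
      omega
    have hJe : M.Indep ↑(((I \ F.image y) ∪ F.image x).erase (y a)) := hJ.subset (by simp)
    have hsub : (↑(((I \ F.image y) ∪ F.image x).erase (y a)) : Set α) ⊆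
        M.closure ↑(I.erase (y a)) := by
      intro z hz
      simp only [Finset.coe_erase, Set.mem_sdiff, Finset.mem_coe, Finset.mem_union,
        Finset.mem_sdiff, Finset.mem_image, Set.mem_singleton_iff] at hz
      obtain ⟨hz | ⟨j, hj, rfl⟩, hne⟩ := hz
      · exact M.mem_closure_of_mem (by simp [hz.1, hne]) (by simp [hE])
      · exact hXcl j hj
    have hxcl' : x a ∉ M.closure ↑(((I \ F.image y) ∪ F.image x).erase (y a)) :=
      fun h => hxcl (M.closure_subset_closure_of_subset_closure hsub h)
    have hfin : M.Indep (insert (x a) ↑(((I \ F.image y) ∪ F.image x).erase (y a))) :=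
      hJe.insert_indep_iff.2 (Or.inl ⟨by simp [hE], hxcl'⟩)
    refine hfin.subset ?_
    have hya := hy a haF
    intro z hz
    simp only [Finset.coe_union, Set.mem_union, Finset.mem_coe, Finset.mem_sdiff,
      Finset.mem_image, Finset.mem_insert, Set.mem_insert_iff, Finset.mem_erase,
      Finset.mem_union] at hz ⊢
    rcases hz with ⟨h1, h2⟩ | ⟨j, rfl | hj, rfl⟩
    · right
      refine ⟨?_, Or.inl ⟨h1, ?_⟩⟩
      · rintro rfl; exact h2 ⟨a, Or.inl rfl, rfl⟩
      · rintro ⟨i, hi, rfl⟩; exact h2 ⟨i, Or.inr hi, rfl⟩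
    · exact Or.inl rfl
    · right
      refine ⟨?_, Or.inr ⟨j, hj, rfl⟩⟩
      intro h
      exact hx j (Finset.mem_insert_of_mem hj) (h ▸ hya)

theorem aux_hall {α : Type*} [Fintype α] [DecidableEq α] (M : Matroid α)
    (hE : M.E = Set.univ) (I J : Finset α) (hI : M.Indep ↑I) (hJ : M.Indep ↑J)
    (hc : I.card = J.card) :
    ∃ f : α → α, Set.InjOn f ↑(J \ I) ∧ ∀ x ∈ J \ I, f x ∈ I \ J ∧
      M.Indep ↑(insert x (I.erase (f x))) := by
  classical
  have hc2 : (I \ J).card = (J \ I).card := by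
    have h1 := Finset.card_sdiff_add_card_inter I J
    have h2 := Finset.card_sdiff_add_card_inter J I
    rw [Finset.inter_comm] at h2
    omega
  let t : {x // x ∈ J \ I} → Finset α := fun x =>
    (I \ J).filter (fun y => M.Indep ↑(insert x.1 (I.erase y)))
  have hall : ∀ A : Finset {x // x ∈ J \ I}, A.card ≤ (A.biUnion t).card := by
    intro A
    by_contra hlt
    push Not at hlt
    set N := A.biUnion t with hN
    have hNsub : N ⊆ I \ J := by
      intro z hz
      simp only [hN, Finset.mem_biUnion, t, Finset.mem_filter] at hz
      obtain ⟨_, _, h, _⟩ := hz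
      exact h
    set A' := A.image Subtype.val with hA'
    have hA'c : A'.card = A.card := Finset.card_image_of_injective _ Subtype.val_injective
    have hA'sub : A' ⊆ J \ I := by
      intro z hz
      simp only [hA', Finset.mem_image] at hz
      obtain ⟨w, _, rfl⟩ := hz
      exact w.2
    set B := (I ∩ J) ∪ N with hB
    have hBI : B ⊆ I := by
      intro z hz
      rcases Finset.mem_union.1 hz with h | h
      · exact (Finset.mem_inter.1 h).1
      · exact (Finset.mem_sdiff.1 (hNsub h)).1
    have hA'le : A'.card ≤ (J \ I).card := Finset.card_le_card hA'sub
    have hne : ((I \ J) \ N).Nonempty := by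
      rw [← Finset.card_pos, Finset.card_sdiff_of_subset hNsub]
      omega
    have hcl : ∀ x ∈ A', x ∈ M.closure ↑B := by
      intro x hx
      have hxJI := hA'sub hx
      have hBeq : (↑B : Set α) = ⋂ y ∈ (↑((I \ J) \ N) : Set α), (↑(I.erase y) : Set α) := by
        ext z
        simp only [Set.mem_iInter, Finset.mem_coe, Finset.mem_erase, hB, Finset.mem_union,
          Finset.mem_inter, Finset.mem_sdiff]
        constructor
        · rintro h y ⟨⟨h1, h2⟩, h3⟩
          refine ⟨?_, hBI (by simpa [hB] using h)⟩
          rintro rfl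
          tauto
        · intro h
          obtain ⟨w, hw⟩ := hne
          have hzI := (h w (by simpa using hw)).2
          by_contra hcon
          exact (h z (by tauto)).1 rfl
      rw [hBeq, Matroid.closure_biInter_eq_biInter_closure_of_biUnion_indep (Finset.coe_nonempty.2 hne)
        (hI.subset (by simp))]
      simp only [Set.mem_iInter]
      intro y hy
      by_contra hcon
      have hyI : y ∈ (I \ J) \ N := by simpa using hy
      have hind : M.Indep ↑(insert x (I.erase y)) := by
        rw [Finset.coe_insert, (hI.subset (by simp)).insert_indep_iff]
        exact Or.inl ⟨by simp [hE], hcon⟩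
      apply (Finset.mem_sdiff.1 hyI).2
      simp only [hA', Finset.mem_image] at hx
      obtain ⟨w, hw, rfl⟩ := hx
      simp only [hN, Finset.mem_biUnion, t, Finset.mem_filter]
      exact ⟨w, hw, (Finset.mem_sdiff.1 hyI).1, hind⟩
    have hsub : (↑((I ∩ J) ∪ A') : Set α) ⊆ M.closure ↑B := by
      intro z hz
      rcases Finset.mem_union.1 (Finset.mem_coe.1 hz) with h | h
      · exact M.mem_closure_of_mem (by simp [hB, Finset.mem_inter.1 h]) (by simp [hE])
      · exact hcl z h
    have hindA : M.Indep ↑((I ∩ J) ∪ A') := by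
      refine hJ.subset ?_
      intro z hz
      rcases Finset.mem_union.1 (Finset.mem_coe.1 hz) with h | h
      · exact (Finset.mem_inter.1 h).2
      · exact (Finset.mem_sdiff.1 (hA'sub h)).1
    have hle := hindA.encard_le_eRk_of_subset hsub
    rw [Matroid.eRk_closure_eq] at hle
    have hle2 := hle.trans (M.eRk_le_encard ↑B)
    rw [Set.encard_coe_eq_coe_finsetCard, Set.encard_coe_eq_coe_finsetCard, Nat.cast_le,
      hB, Finset.card_union_of_disjoint, Finset.card_union_of_disjoint] at hle2
    · omega
    · exact Finset.disjoint_left.2 fun z h1 h2 =>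
        (Finset.mem_sdiff.1 (hNsub h2)).2 (Finset.mem_inter.1 h1).2
    · exact Finset.disjoint_left.2 fun z h1 h2 =>
        (Finset.mem_sdiff.1 (hA'sub h2)).2 (Finset.mem_inter.1 h1).1
  obtain ⟨f, hf1, hf2⟩ := (Finset.all_card_le_biUnion_card_iff_exists_injective t).1 hall
  refine ⟨fun x => if h : x ∈ J \ I then f ⟨x, h⟩ else x, ?_, ?_⟩
  · intro a ha b hb hab
    have ha' : a ∈ J \ I := ha
    have hb' : b ∈ J \ I := hb
    simp only [dif_pos ha', dif_pos hb'] at hab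
    exact congrArg Subtype.val (hf1 hab)
  · intro x hx
    simp only [dif_pos hx]
    have := hf2 ⟨x, hx⟩
    simpa [t, Finset.mem_filter] using this

theorem aux_hall_perm {α : Type*} [Fintype α] [DecidableEq α] (M₁ M₂ : Matroid α)
    (hE₁ : M₁.E = Set.univ) (hE₂ : M₂.E = Set.univ) (I J : Finset α)
    (hI : CommonIndep M₁ M₂ I) (hJ : CommonIndep M₁ M₂ J) (hc : I.card = J.card) :
    ∃ π : Equiv.Perm α, π.support = symmDiff I J ∧
      ∀ x ∈ symmDiff I J, ExchAdj M₁ M₂ I x (π x) := by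
  classical
  obtain ⟨f, hf, hf'⟩ := aux_hall M₁ hE₁ I J hI.1 hJ.1 hc
  obtain ⟨g, hg, hg'⟩ := aux_hall M₂ hE₂ I J hI.2 hJ.2 hc
  have hc2 : (I \ J).card = (J \ I).card := by
    have h1 := Finset.card_sdiff_add_card_inter I J
    have h2 := Finset.card_sdiff_add_card_inter J I
    rw [Finset.inter_comm] at h2
    omega
  have himg : (J \ I).image f = I \ J := by
    apply Finset.eq_of_subset_of_card_le
    · intro z hz
      obtain ⟨x, hx, rfl⟩ := Finset.mem_image.1 hz
      exact (hf' x hx).1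
    · rw [Finset.card_image_of_injOn hf]; omega
  have hinv : ∀ y, ∃ x, y ∈ I \ J → x ∈ J \ I ∧ f x = y := by
    intro y
    by_cases hy : y ∈ I \ J
    · rw [← himg] at hy
      obtain ⟨x, hx, rfl⟩ := Finset.mem_image.1 hy
      exact ⟨x, fun _ => ⟨hx, rfl⟩⟩
    · exact ⟨y, fun h => absurd h hy⟩
  choose h hh using hinv
  let q : α → α := fun v => if v ∈ I then (if v ∈ J then v else h v) else
    (if v ∈ J then g v else v)
  have q1 : ∀ v, v ∈ I → v ∉ J → q v = h v := fun v h1 h2 => by simp [q, h1, h2]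
  have q2 : ∀ v, v ∉ I → v ∈ J → q v = g v := fun v h1 h2 => by simp [q, h1, h2]
  have q3 : ∀ v, (v ∈ I ↔ v ∈ J) → q v = v := fun v h1 => by
    by_cases hv : v ∈ I <;> simp [q, hv, ← h1]
  have hh1 : ∀ v, v ∈ I → v ∉ J → h v ∈ J ∧ h v ∉ I ∧ f (h v) = v := fun v h1 h2 => by
    have := hh v (by simp [h1, h2])
    simpa [and_assoc] using this
  have hg1 : ∀ v, v ∉ I → v ∈ J → g v ∈ I ∧ g v ∉ J := fun v h1 h2 => by
    have := (hg' v (by simp [h1, h2])).1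
    simpa using this
  have hq : Function.Injective q := by
    intro a b hab
    by_cases a1 : a ∈ I <;> by_cases a2 : a ∈ J <;> by_cases b1 : b ∈ I <;>
      by_cases b2 : b ∈ J <;> simp only [q, a1, a2, b1, b2, if_true, if_false] at hab <;>
      first
      | exact hab
      | (have := hg (by simp [a1, a2]) (by simp [b1, b2]) hab; exact this)
      | grind
  let π : Equiv.Perm α := Equiv.ofBijective q (Finite.injective_iff_bijective.1 hq)
  have hπ : ∀ v, π v = q v := fun v => rfl
  refine ⟨π, ?_, ?_⟩
  · ext v
    rw [Equiv.Perm.mem_support, hπ, Finset.mem_symmDiff]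
    grind
  · intro x hx
    rw [hπ]
    rcases Finset.mem_symmDiff.1 hx with ⟨h1, h2⟩ | ⟨h1, h2⟩
    · rw [q1 x h1 h2]
      have h3 := hh1 x h1 h2
      have h4 := (hf' (h x) (by simp [h3])).2
      rw [h3.2.2] at h4
      exact Or.inl ⟨h1, h3.2.1, h4⟩
    · rw [q2 x h2 h1]
      exact Or.inr ⟨h2, (hg1 x h2 h1).1, (hg' x (by simp [h1, h2])).2⟩

theorem aux_isCycle_iff {α : Type*} (Adj : α → α → Prop) (l : List α) :
    IsCycle Adj l ↔ l ≠ [] ∧ l.Nodup ∧ ∀ (i : ℕ) (h : i < l.length),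
      Adj l[i] (l[(i+1) % l.length]'(Nat.mod_lt _ (by omega))) := by
  unfold IsCycle
  constructor
  · rintro ⟨h, hch, hcl, hnd⟩
    refine ⟨h, hnd, ?_⟩
    intro i hi
    have hch' : l.IsChain Adj := hch
    rw [List.isChain_iff_getElem] at hch'
    by_cases hi' : i + 1 < l.length
    · have := hch' i hi'
      simpa only [Nat.mod_eq_of_lt hi'] using this
    · have h1 : i + 1 = l.length := by omega
      have h2 : i = l.length - 1 := by omega
      subst h2
      rw [List.getLast_eq_getElem, List.head_eq_getElem] at hcl
      simpa only [h1, Nat.mod_self] using hcl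
  · rintro ⟨h, hnd, hadj⟩
    have hpos : 0 < l.length := List.length_pos_iff.2 h
    refine ⟨h, ?_, ?_, hnd⟩
    · change l.IsChain Adj
      rw [List.isChain_iff_getElem]
      intro i hi
      have := hadj i (by omega)
      simpa only [Nat.mod_eq_of_lt hi] using this
    · have := hadj (l.length - 1) (by omega)
      rw [List.getLast_eq_getElem, List.head_eq_getElem]
      simpa only [Nat.sub_add_cancel hpos, Nat.mod_self] using this

theorem aux_setW_symmDiff {α : Type*} [DecidableEq α] (W : α → ℤ) (I T : Finset α) :
    setW W (symmDiff I T) = setW W I + ∑ x ∈ T, exchWt W I x := by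
  unfold setW exchWt
  rw [Finset.sum_ite, Finset.sum_neg_distrib]
  have h1 : symmDiff I T = (I \ T) ∪ (T.filter (fun x => x ∉ I)) := by
    ext z; simp [Finset.mem_symmDiff]
  have h2 : I = (I \ T) ∪ (T.filter (fun x => x ∈ I)) := by
    ext z; simp; tauto
  have h3 : Disjoint (I \ T) (T.filter (fun x => x ∈ I)) :=
    Finset.disjoint_left.2 (by intro z; simp; tauto)
  have h4 : Disjoint (I \ T) (T.filter (fun x => x ∉ I)) :=
    Finset.disjoint_left.2 (by intro z; simp; tauto)
  have h5 := congrArg (fun S => ∑ x ∈ S, W x) h2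
  simp only [Finset.sum_union h3] at h5
  rw [h1, Finset.sum_union h4, h5]
  ring

theorem aux_listW_eq {α : Type*} [DecidableEq α] (W : α → ℤ) (I : Finset α) (l : List α)
    (h : l.Nodup) : listW W I l = ∑ x ∈ l.toFinset, exchWt W I x := by
  unfold listW
  rw [List.sum_toFinset _ h]

/-- sub-cycles from chords -/
theorem aux_back {α : Type*} (Adj : α → α → Prop) (l : List α) (hl : IsCycle Adj l)
    (i j : ℕ) (hi : i < l.length) (hji : j < i) (hadj : Adj l[i] l[j+1]) :
    IsCycle Adj ((l.take (i+1)).drop (j+1)) := by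
  rw [aux_isCycle_iff] at hl ⊢
  obtain ⟨h0, hnd, ha⟩ := hl
  have hlen : ((l.take (i+1)).drop (j+1)).length = i - j := by simp; omega
  refine ⟨?_, ?_, ?_⟩
  · apply List.ne_nil_of_length_pos; omega
  · exact (hnd.sublist (List.take_sublist _ _)).sublist (List.drop_sublist _ _)
  · intro m hm
    rw [hlen] at hm
    simp only [hlen, List.getElem_drop, List.getElem_take]
    by_cases hm' : m + 1 < i - j
    · have := ha (j + 1 + m) (by omega)
      simp only [Nat.mod_eq_of_lt hm']
      have h3 : (j + 1 + m + 1) % l.length = j + 1 + (m + 1) := by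
        rw [Nat.mod_eq_of_lt (by omega)]; omega
      simpa only [h3] using this
    · have h1 : m + 1 = i - j := by omega
      have h2 : j + 1 + m = i := by omega
      simp only [h1, Nat.mod_self, h2]
      exact hadj

theorem aux_fwd {α : Type*} (Adj : α → α → Prop) (l : List α) (hl : IsCycle Adj l)
    (i j : ℕ) (hij : i < j) (hj : j < l.length)
    (hadj : Adj l[i] (l[(j+1) % l.length]'(Nat.mod_lt _ (by omega)))) :
    IsCycle Adj (l.take (i+1) ++ l.drop (j+1)) := by
  rw [aux_isCycle_iff] at hl ⊢
  obtain ⟨h0, hnd, ha⟩ := hl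
  have hlen : (l.take (i+1) ++ l.drop (j+1)).length = l.length - (j - i) := by simp; omega
  refine ⟨?_, ?_, ?_⟩
  · apply List.ne_nil_of_length_pos; omega
  · have : (l.take (i+1) ++ l.drop (j+1)).Sublist (l.take (i+1) ++ l.drop (i+1)) :=
      List.Sublist.append_left (List.drop_sublist_drop_left l (by omega)) _
    rw [List.take_append_drop] at this
    exact hnd.sublist this
  · have hget : ∀ (m : ℕ) (hm : m < (l.take (i+1) ++ l.drop (j+1)).length),
        (l.take (i+1) ++ l.drop (j+1))[m] =
          l[if m ≤ i then m else m + (j - i)]'(by split_ifs <;> omega) := by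
      intro m hm
      rw [List.getElem_append]
      by_cases h : m ≤ i
      · have : m < l.length := by omega
        simp [this, h]
      · have : ¬ m < (l.take (i+1)).length := by simp; omega
        simp only [this, h, dif_neg, List.getElem_drop, not_false_eq_true, if_false]
        congr 1
        simp; omega
    intro m hm
    rw [hget, hget]
    simp only [hlen] at hm ⊢
    rcases lt_trichotomy m i with h | h | h
    · have := ha m (by omega)
      have h1 : (m + 1) % l.length = m + 1 := Nat.mod_eq_of_lt (by omega)
      have h2 : (m + 1) % (l.length - (j - i)) = m + 1 := Nat.mod_eq_of_lt (by omega)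
      simp only [h1] at this
      simpa only [h2, if_pos (show m ≤ i by omega), if_pos (show m + 1 ≤ i by omega)] using this
    · subst h
      by_cases hjn : j + 1 < l.length
      · have h1 : (j + 1) % l.length = j + 1 := Nat.mod_eq_of_lt (by omega)
        have h2 : (m + 1) % (l.length - (j - m)) = m + 1 := Nat.mod_eq_of_lt (by omega)
        have h3 : m + 1 + (j - m) = j + 1 := by omega
        simp only [h1] at hadj
        simpa only [h2, le_refl, if_true, if_neg (show ¬ m + 1 ≤ m by omega), h3] using hadj
      · have h1 : j + 1 = l.length := by omega
        have h2 : m + 1 = l.length - (j - m) := by omega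
        have h3 : (m + 1) % (l.length - (j - m)) = 0 := by rw [← h2, Nat.mod_self]
        simp only [h1, Nat.mod_self] at hadj
        simpa only [h3, le_refl, if_true, Nat.zero_le] using hadj
    · have := ha (m + (j - i)) (by omega)
      by_cases hmn : m + 1 < l.length - (j - i)
      · have h1 : (m + (j - i) + 1) % l.length = m + 1 + (j - i) := by
          rw [Nat.mod_eq_of_lt (by omega)]; omega
        have h2 : (m + 1) % (l.length - (j - i)) = m + 1 := Nat.mod_eq_of_lt (by omega)
        simp only [h1] at this
        simpa only [h2, if_neg (show ¬ m ≤ i by omega), if_neg (show ¬ m + 1 ≤ i by omega)]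
          using this
      · have h1 : (m + (j - i) + 1) = l.length := by omega
        have h2 : m + 1 = l.length - (j - i) := by omega
        have h3 : (m + 1) % (l.length - (j - i)) = 0 := by rw [← h2, Nat.mod_self]
        simp only [h1, Nat.mod_self] at this
        simpa only [h3, if_neg (show ¬ m ≤ i by omega), Nat.zero_le, if_true] using this

theorem aux_rotate {α : Type*} (Adj : α → α → Prop) (l : List α) (hl : IsCycle Adj l)
    (s : α) (hs : s ∈ l) : ∃ l', IsCycle Adj (s :: l') ∧ l.Perm (s :: l') := by
  obtain ⟨a, b, rfl⟩ := List.append_of_mem hs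
  have hperm : (a ++ s :: b).Perm (s :: (b ++ a)) := by
    rw [← List.cons_append]; exact List.perm_append_comm
  refine ⟨b ++ a, ?_, hperm⟩
  obtain ⟨h, hch, hcl, hnd⟩ := hl
  have hch' : (a ++ s :: b).IsChain Adj := hch
  refine ⟨by simp, ?_, ?_, hperm.nodup_iff.1 hnd⟩
  · change (s :: (b ++ a)).IsChain Adj
    rw [← List.cons_append]
    rw [List.isChain_append] at hch' ⊢
    refine ⟨hch'.2.1, hch'.1, ?_⟩
    intro x hx y hy
    cases a with
    | nil => simp at hy
    | cons c a =>
      simp at hy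
      subst hy
      rw [List.getLast?_eq_getLast_of_ne_nil (by simp)] at hx
      simp only [Option.mem_def, Option.some.injEq] at hx
      subst hx
      simpa using hcl
  · cases a using List.reverseRecOn with
    | nil => simpa using hcl
    | append_singleton a c =>
      rw [List.isChain_append] at hch'
      have := hch'.2.2 c (by simp) s (by simp)
      have h2 : (s :: (b ++ (a ++ [c]))).getLast (by simp) = c := by
        simp [List.getLast_cons]
      rw [h2]
      simpa using this

theorem aux_key {α : Type*} [Fintype α] [DecidableEq α]
    (M₁ M₂ : Matroid α) (hE₁ : M₁.E = Set.univ) (hE₂ : M₂.E = Set.univ)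
    (W : α → ℤ) (I : Finset α) (hI : CommonIndep M₁ M₂ I) (s : α) (l : List α)
    (hC : IsCycle (ExchAdj M₁ M₂ I) (s :: l))
    (h1 : ∀ C', IsCycle (ExchAdj M₁ M₂ I) C' → C'.length < (s :: l).length → s ∈ C' →
      listW W I (s :: l) < listW W I C')
    (h2 : ∀ C', IsCycle (ExchAdj M₁ M₂ I) C' → C'.length < (s :: l).length → s ∉ C' →
      0 < listW W I C') :
    CommonIndep M₁ M₂ (symmDiff I (s :: l).toFinset) ∧
      (symmDiff I (s :: l).toFinset).card = I.card := by
  set C := s :: l with hCdef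
  set n := C.length with hn
  have hn0 : 0 < n := by simp [hn, hCdef]
  have hcyc := (aux_isCycle_iff _ _).1 hC
  obtain ⟨-, hnd, hadj⟩ := hcyc
  let v : ℕ → α := fun i => C.getD i s
  have hv : ∀ i (h : i < n), v i = C[i] := fun i h => by simp [v, List.getElem?_eq_getElem h]
  let σ : ℕ → ℕ := fun i => (i + 1) % n
  have hσ : ∀ i, σ i < n := fun i => Nat.mod_lt _ hn0
  have hA : ∀ i < n, ExchAdj M₁ M₂ I (v i) (v (σ i)) := fun i hi => by
    rw [hv i hi, hv _ (hσ i)]; exact hadj i hi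
  have hmem : ∀ z, z ∈ C.toFinset ↔ ∃ i < n, v i = z := by
    intro z
    rw [List.mem_toFinset, List.mem_iff_getElem]
    constructor
    · rintro ⟨i, hi, rfl⟩; exact ⟨i, hi, hv i hi⟩
    · rintro ⟨i, hi, rfl⟩; exact ⟨i, hi, (hv i hi).symm⟩
  have hinj : ∀ i < n, ∀ j < n, v i = v j → i = j := by
    intro i hi j hj h
    rw [hv i hi, hv j hj] at h
    exact (hnd.getElem_inj_iff).1 h
  have hσsurj : ∀ j < n, ∃ i < n, σ i = j := by
    intro j hj
    rcases Nat.eq_zero_or_pos j with rfl | h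
    · exact ⟨n - 1, by omega, by simp only [σ]; rw [Nat.sub_add_cancel hn0, Nat.mod_self]⟩
    · exact ⟨j - 1, by omega, by simp only [σ]; rw [Nat.sub_add_cancel h, Nat.mod_eq_of_lt hj]⟩
  have hσinj : ∀ i < n, ∀ j < n, σ i = σ j → i = j := by
    have hs : Set.SurjOn σ ↑(Finset.range n) ↑(Finset.range n) := by
      intro j hj
      obtain ⟨i, hi, h⟩ := hσsurj j (by simpa using hj)
      exact ⟨i, by simpa using hi, h⟩
    have := Finset.injOn_of_surjOn_of_card_le σ (fun i _ => by simpa using hσ i) hs le_rfl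
    intro i hi j hj h
    exact this (by simpa using hi) (by simpa using hj) h
  let φ : ℕ → ℤ := fun i => listW W I (C.take (i+1))
  have hchord : ∀ i < n, ∀ j < n, i ≠ j → ExchAdj M₁ M₂ I (v i) (v (σ j)) → φ j < φ i := by
    intro i hi j hj hne hadj'
    rw [hv i hi, hv _ (hσ j)] at hadj'
    have htot : ∀ a, listW W I (C.take a) + listW W I (C.drop a) = listW W I C := by
      intro a
      unfold listW
      rw [← List.sum_append, ← List.map_append, List.take_append_drop]
    rcases lt_or_gt_of_ne hne with h | h
    · have hc := aux_fwd _ C hC i j h hj hadj'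
      have := h1 _ hc (by simp; omega) (by simp [hCdef])
      have e : listW W I (C.take (i+1) ++ C.drop (j+1)) = φ i + listW W I (C.drop (j+1)) := by
        simp [listW, φ]
      have := htot (j+1)
      simp only [φ] at e ⊢
      omega
    · have h3 : (j + 1) % n = j + 1 := Nat.mod_eq_of_lt (by omega)
      simp only [σ, h3] at hadj'
      have hc := aux_back _ C hC i j hi h hadj'
      have hns : s ∉ (C.take (i+1)).drop (j+1) := by
        intro hs
        have : s ∈ l := by
          simp only [hCdef, List.take_succ_cons, List.drop_succ_cons] at hs
          exact List.mem_of_mem_take (List.mem_of_mem_drop hs)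
        exact (List.nodup_cons.1 hnd).1 this
      have := h2 _ hc (by simp; omega) hns
      have e : φ i = φ j + listW W I ((C.take (i+1)).drop (j+1)) := by
        have : C.take (j+1) = (C.take (i+1)).take (j+1) := by
          rw [List.take_take, min_eq_left (by omega)]
        simp only [φ]
        rw [this]
        unfold listW
        rw [← List.sum_append, ← List.map_append, List.take_append_drop]
      omega
  have hside : ∀ i < n, (v i ∈ I ↔ v (σ i) ∉ I) := by
    intro i hi
    rcases hA i hi with h | h
    · simp [h.1, h.2.1]
    · simp [h.1, h.2.1]
  let F₁ := (Finset.range n).filter (fun i => v i ∈ I)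
  let F₂ := (Finset.range n).filter (fun i => v i ∉ I)
  have m1 : ∀ i, i ∈ F₁ ↔ i < n ∧ v i ∈ I := fun i => by simp [F₁]
  have m2 : ∀ i, i ∈ F₂ ↔ i < n ∧ v i ∉ I := fun i => by simp [F₂]
  have e1 : symmDiff I C.toFinset = (I \ F₁.image v) ∪ F₁.image (fun i => v (σ i)) := by
    ext z
    rw [Finset.mem_symmDiff, hmem, Finset.mem_union, Finset.mem_sdiff, Finset.mem_image,
      Finset.mem_image]
    constructor
    · rintro (⟨h, h'⟩ | ⟨⟨i, hi, rfl⟩, h'⟩)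
      · left
        refine ⟨h, ?_⟩
        rintro ⟨i, hi, rfl⟩
        exact h' ⟨i, ((m1 i).1 hi).1, rfl⟩
      · right
        obtain ⟨j, hj, rfl⟩ := hσsurj i hi
        exact ⟨j, (m1 j).2 ⟨hj, (hside j hj).2 h'⟩, rfl⟩
    · rintro (⟨h, h'⟩ | ⟨i, hi, rfl⟩)
      · left
        refine ⟨h, ?_⟩
        rintro ⟨i, hi, rfl⟩
        exact h' ⟨i, (m1 i).2 ⟨hi, h⟩, rfl⟩
      · right
        rw [m1] at hi
        exact ⟨⟨σ i, hσ i, rfl⟩, (hside i hi.1).1 hi.2⟩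
  have e2 : symmDiff I C.toFinset = (I \ F₂.image (fun i => v (σ i))) ∪ F₂.image v := by
    ext z
    rw [Finset.mem_symmDiff, hmem, Finset.mem_union, Finset.mem_sdiff, Finset.mem_image,
      Finset.mem_image]
    constructor
    · rintro (⟨h, h'⟩ | ⟨⟨i, hi, rfl⟩, h'⟩)
      · left
        refine ⟨h, ?_⟩
        rintro ⟨i, hi, rfl⟩
        exact h' ⟨σ i, hσ i, rfl⟩
      · right
        exact ⟨i, (m2 i).2 ⟨hi, h'⟩, rfl⟩
    · rintro (⟨h, h'⟩ | ⟨i, hi, rfl⟩)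
      · left
        refine ⟨h, ?_⟩
        rintro ⟨i, hi, rfl⟩
        obtain ⟨j, hj, rfl⟩ := hσsurj i hi
        exact h' ⟨j, (m2 j).2 ⟨hj, fun hh => (hside j hj).1 hh h⟩, rfl⟩
      · right
        rw [m2] at hi
        exact ⟨⟨i, hi.1, rfl⟩, hi.2⟩
  have hs2 : ∀ i < n, v i ∉ I → v (σ i) ∈ I := fun i hi h => by
    by_contra hh; exact h ((hside i hi).2 hh)
  refine ⟨⟨?_, ?_⟩, ?_⟩
  · rw [e1]
    apply aux_indep_exch M₁ hE₁ I hI.1 v (fun i => v (σ i)) φ F₁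
    · intro i hi; rw [m1] at hi; exact (hside i hi.1).1 hi.2
    · intro i hi; rw [m1] at hi; exact hi.2
    · intro i hi
      rw [m1] at hi
      rcases hA i hi.1 with h | h
      · exact h.2.2
      · exact absurd hi.2 h.1
    · intro i hi j hj hne hind
      rw [m1] at hi hj
      exact hchord i hi.1 j hj.1 hne (Or.inl ⟨hi.2, (hside j hj.1).1 hj.2, hind⟩)
  · rw [e2]
    apply aux_indep_exch M₂ hE₂ I hI.2 (fun i => v (σ i)) v (fun i => - φ i) F₂
    · intro i hi; rw [m2] at hi; exact hi.2
    · intro i hi; rw [m2] at hi; exact hs2 i hi.1 hi.2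
    · intro i hi
      rw [m2] at hi
      rcases hA i hi.1 with h | h
      · exact absurd h.1 hi.2
      · exact h.2.2
    · intro i hi j hj hne hind
      rw [m2] at hi hj
      have := hchord j hj.1 i hi.1 hne.symm (Or.inr ⟨hj.2, hs2 i hi.1 hi.2, hind⟩)
      simpa using this
  · have c1 : F₁.card ≤ F₂.card := by
      apply Finset.card_le_card_of_injOn σ
      · intro i hi
        have hi := (m1 i).1 hi
        exact (m2 _).2 ⟨hσ i, (hside i hi.1).1 hi.2⟩
      · intro i hi j hj h
        exact hσinj i ((m1 i).1 hi).1 j ((m1 j).1 hj).1 h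
    have c2 : F₂.card ≤ F₁.card := by
      apply Finset.card_le_card_of_injOn σ
      · intro i hi
        have hi := (m2 i).1 hi
        exact (m1 _).2 ⟨hσ i, hs2 i hi.1 hi.2⟩
      · intro i hi j hj h
        exact hσinj i ((m2 i).1 hi).1 j ((m2 j).1 hj).1 h
    have i1 : (F₁.image v).card = F₁.card := Finset.card_image_of_injOn (by
      intro i hi j hj h
      exact hinj i ((m1 i).1 hi).1 j ((m1 j).1 hj).1 h)
    have i2 : (F₁.image (fun i => v (σ i))).card = F₁.card := Finset.card_image_of_injOn (by
      intro i hi j hj h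
      exact hσinj i ((m1 i).1 hi).1 j ((m1 j).1 hj).1 (hinj _ (hσ i) _ (hσ j) h))
    have hsub : F₁.image v ⊆ I := by
      intro z hz
      obtain ⟨i, hi, rfl⟩ := Finset.mem_image.1 hz
      exact ((m1 i).1 hi).2
    rw [e1, Finset.card_union_of_disjoint, Finset.card_sdiff_of_subset hsub, i1, i2]
    · have := Finset.card_le_card hsub
      omega
    · refine Finset.disjoint_left.2 fun z hz hz' => ?_
      obtain ⟨i, hi, rfl⟩ := Finset.mem_image.1 hz'
      exact (hside i ((m1 i).1 hi).1).1 ((m1 i).1 hi).2 (Finset.mem_sdiff.1 hz).1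

theorem aux_listW_perm {α : Type*} [DecidableEq α] (W : α → ℤ) (I : Finset α) {l l' : List α}
    (h : l.Perm l') : listW W I l = listW W I l' :=
  (h.map _).sum_eq

theorem aux_pos {α : Type*} [Fintype α] [DecidableEq α]
    (M₁ M₂ : Matroid α) (hE₁ : M₁.E = Set.univ) (hE₂ : M₂.E = Set.univ)
    (W : α → ℤ) (k : ℕ) (I : Finset α) (hiso : Isolates M₁ M₂ W k I) :
    ∀ (n : ℕ) (C : List α), C.length = n → IsCycle (ExchAdj M₁ M₂ I) C → 0 < listW W I C := by
  intro n
  induction n using Nat.strong_induction_on with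
  | _ n ih =>
    intro C hn hC
    by_contra hcon
    push Not at hcon
    obtain ⟨s, hs⟩ := List.exists_mem_of_ne_nil C hC.1
    obtain ⟨l, hl, hp⟩ := aux_rotate _ C hC s hs
    have hlen := hp.length_eq
    have hw := aux_listW_perm W I hp
    obtain ⟨hci, hcard⟩ := aux_key M₁ M₂ hE₁ hE₂ W I hiso.1 s l hl
      (fun C' h1 h2 _ => by
        have := ih C'.length (by omega) C' rfl h1
        omega)
      (fun C' h1 h2 _ => ih C'.length (by omega) C' rfl h1)
    have hne : symmDiff I (s :: l).toFinset ≠ I := by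
      intro h
      have h' : (s :: l).toFinset = ∅ := by
        rw [symmDiff_eq_left] at h
        exact h
      simp at h'
    have := hiso.2.2 _ hci (hcard.trans hiso.2.1) hne
    obtain ⟨_, _, _, hnd⟩ := hl
    rw [aux_setW_symmDiff, ← aux_listW_eq W I _ hnd] at this
    omega

theorem aux_toList {α : Type*} [Fintype α] [DecidableEq α] (Adj : α → α → Prop)
    (π : Equiv.Perm α) (h : ∀ x ∈ π.support, Adj x (π x)) (s : α) (hs : s ∈ π.support) :
    IsCycle Adj (π.toList s) := by
  rw [aux_isCycle_iff]
  have hne : π.toList s ≠ [] := by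
    rw [Ne, Equiv.Perm.toList_eq_nil_iff]; simpa using hs
  refine ⟨hne, Equiv.Perm.nodup_toList _ _, ?_⟩
  intro i hi
  have hm : (π.toList s)[i] ∈ π.toList s := List.getElem_mem hi
  have hnext := Equiv.Perm.next_toList_eq_apply π s _ hm
  rw [List.next_getElem _ (Equiv.Perm.nodup_toList _ _)] at hnext
  rw [hnext]
  apply h
  rw [Equiv.Perm.mem_toList_iff] at hm
  exact hm.1.mem_support_iff.1 hs

theorem aux_toList_sum {α : Type*} [Fintype α] [DecidableEq α] (W : α → ℤ) (I : Finset α)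
    (π : Equiv.Perm α) (s : α) (hs : s ∈ π.support) :
    listW W I (π.toList s) = ∑ x ∈ (π.cycleOf s).support, exchWt W I x := by
  rw [aux_listW_eq W I _ (Equiv.Perm.nodup_toList _ _)]
  congr 1
  ext z
  rw [List.mem_toFinset, Equiv.Perm.mem_toList_iff, Equiv.Perm.mem_support_cycleOf_iff]

theorem aux_split {α : Type*} [Fintype α] [DecidableEq α] (w : α → ℤ) (σ τ : Equiv.Perm α)
    (h : σ.Disjoint τ) : ∑ x ∈ (σ * τ).support, w x =
      ∑ x ∈ σ.support, w x + ∑ x ∈ τ.support, w x := by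
  rw [h.support_mul, Finset.sum_union h.disjoint_support]

theorem aux_adj_right {α : Type*} [Fintype α] [DecidableEq α] (Adj : α → α → Prop)
    (σ τ : Equiv.Perm α) (hd : σ.Disjoint τ) (h : ∀ x ∈ (σ * τ).support, Adj x ((σ * τ) x)) :
    ∀ x ∈ τ.support, Adj x (τ x) := by
  intro x hx
  have hx2 : x ∈ (σ * τ).support := by
    rw [hd.support_mul]; exact Finset.mem_union_right _ hx
  have h1 := h x hx2
  have : τ x ∈ τ.support := Equiv.Perm.apply_mem_support.2 hx
  have h3 : σ (τ x) = τ x := by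
    rcases hd (τ x) with h | h
    · exact h
    · exact absurd h (Equiv.Perm.mem_support.1 this)
  rwa [Equiv.Perm.mul_apply, h3] at h1

theorem aux_nonneg {α : Type*} [Fintype α] [DecidableEq α] (Adj : α → α → Prop)
    (W : α → ℤ) (I : Finset α) (hpos : ∀ C, IsCycle Adj C → 0 < listW W I C)
    (π : Equiv.Perm α) : (∀ x ∈ π.support, Adj x (π x)) →
      0 ≤ ∑ x ∈ π.support, exchWt W I x := by
  induction π using Equiv.Perm.cycle_induction_on with
  | base_one => intro _; simp
  | base_cycles σ hσ =>
    intro h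
    obtain ⟨x, hx, _⟩ := id hσ
    have hx' : x ∈ σ.support := Equiv.Perm.mem_support.2 hx
    have := hpos _ (aux_toList Adj σ h x hx')
    rw [aux_toList_sum W I σ x hx', hσ.cycleOf_eq hx] at this
    exact this.le
  | induction_disjoint σ τ hd _ ih1 ih2 =>
    intro h
    rw [aux_split _ _ _ hd]
    have h2 := ih2 (aux_adj_right Adj σ τ hd h)
    rw [hd.commute.eq] at h
    have h1 := ih1 (aux_adj_right Adj τ σ hd.symm h)
    omega

/-- Suppose `W` isolates a size-`k` common independent set `I_k`, `s ∈ S`, and `C*` is a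
directed cycle through `s` in `𝓔(M₁,M₂,I_k)` of minimum weight, of minimum hop-length among
the minimum-weight directed cycles through `s`. Then `I_k Δ V(C*)` is a size-`k` common
independent set attaining the minimum of `W(I)` over all size-`k` common independent sets
`I` with `s ∈ I Δ I_k`. -/
theorem symmDiff_minCycle_is_min {α : Type*} [Fintype α] [DecidableEq α]
    (M₁ M₂ : Matroid α) (hE₁ : M₁.E = Set.univ) (hE₂ : M₂.E = Set.univ)
    (W : α → ℤ) (k : ℕ) (Ik : Finset α) (hiso : Isolates M₁ M₂ W k Ik)
    (s : α) (C : List α) (hC : IsCycle (ExchAdj M₁ M₂ Ik) C) (hsC : s ∈ C)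
    (hCmin : ∀ C' : List α, IsCycle (ExchAdj M₁ M₂ Ik) C' → s ∈ C' →
      listW W Ik C ≤ listW W Ik C')
    (hClen : ∀ C' : List α, IsCycle (ExchAdj M₁ M₂ Ik) C' → s ∈ C' →
      listW W Ik C' = listW W Ik C → C.length ≤ C'.length) :
    CommonIndep M₁ M₂ (symmDiff Ik C.toFinset) ∧ (symmDiff Ik C.toFinset).card = k ∧
    IsLeast {w : ℤ | ∃ I : Finset α, CommonIndep M₁ M₂ I ∧ I.card = k ∧
        s ∈ symmDiff I Ik ∧ setW W I = w}
      (setW W (symmDiff Ik C.toFinset)) := by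
  have hpos : ∀ C, IsCycle (ExchAdj M₁ M₂ Ik) C → 0 < listW W Ik C :=
    fun C h => aux_pos M₁ M₂ hE₁ hE₂ W k Ik hiso C.length C rfl h
  obtain ⟨l, hl, hp⟩ := aux_rotate _ C hC s hsC
  have hlen := hp.length_eq
  have hw := aux_listW_perm W Ik hp
  have hset : C.toFinset = (s :: l).toFinset := List.toFinset_eq_of_perm _ _ hp
  obtain ⟨hci, hcard⟩ := aux_key M₁ M₂ hE₁ hE₂ W Ik hiso.1 s l hl
    (fun C' h1 h2 h3 => by
      have h4 := hCmin C' h1 h3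
      have h5 := hClen C' h1 h3
      by_contra hcon
      have := h5 (by omega)
      omega)
    (fun C' h1 h2 _ => hpos C' h1)
  rw [← hset] at hci hcard
  refine ⟨hci, hcard.trans hiso.2.1, ⟨_, hci, hcard.trans hiso.2.1, ?_, rfl⟩, ?_⟩
  · rw [symmDiff_comm, symmDiff_symmDiff_cancel_left]
    simpa using hsC
  · rintro w ⟨J, hJ, hJk, hsJ, rfl⟩
    obtain ⟨_, _, _, hnd⟩ := hC
    rw [aux_setW_symmDiff, ← aux_listW_eq W Ik _ hnd]
    have hJe : J = symmDiff Ik (symmDiff Ik J) := (symmDiff_symmDiff_cancel_left Ik J).symm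
    rw [hJe, aux_setW_symmDiff]
    obtain ⟨π, hπ, hadj⟩ := aux_hall_perm M₁ M₂ hE₁ hE₂ Ik J hiso.1 hJ (hiso.2.1.trans hJk.symm)
    rw [symmDiff_comm, ← hπ] at hsJ
    rw [← hπ] at hadj ⊢
    have h1 := hCmin _ (aux_toList _ π hadj s hsJ)
      (Equiv.Perm.mem_toList_iff.2 ⟨Equiv.Perm.SameCycle.refl _ _, hsJ⟩)
    rw [aux_toList_sum W Ik π s hsJ] at h1
    have hd := Equiv.Perm.disjoint_mul_inv_of_mem_cycleFactorsFinset
      (Equiv.Perm.cycleOf_mem_cycleFactorsFinset_iff.2 hsJ)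
    have hmul : π = π.cycleOf s * (π * (π.cycleOf s)⁻¹) := by
      rw [← hd.commute.eq]; simp
    have h2 := aux_adj_right (ExchAdj M₁ M₂ Ik) _ _ hd.symm (by rw [← hmul]; exact hadj)
    have h3 := aux_nonneg _ W Ik hpos _ h2
    have h4 := aux_split (exchWt W Ik) _ _ hd.symm
    rw [← hmul] at h4
    omega
end
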